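/- arXiv:math/9712238 — 3 statements merged into one kernel-verified Lean document; each statement's English description precedes it below -/
import Mathlib

section
/- For every prime power q, every integer n ≥ 0 and every integer k with 0 ≤ k ≤ n, the proportion of elements A ∈ U(n,q) whose fixed space has dimension k satisfies P_{U,n}(k,q) = (1/|U(k,q)|) · Σ_{i=0}^{n−k} (−1)^i · (−q)^{i(i−1)/2} / ((−q)^{k·i} · |U(i,q)|), as an identity of rational numbers. -/
/-!
Write `p = -q`, let `f(A)` be the dimension of the fixed space of `A ∈ U(n,q)`, and let
`fall p x j = ∏_{i<j} (x - p^i)`. The heart of the matter is the moment identity (`moments`)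

  `∑_A fall p (p^{f(A)}) j = (-1)^j |U(n,q)|`  for `j ≤ n`.

As `0 ≤ f(A) ≤ n`, Lagrange interpolation at the nodes `1, p, …, p^n` writes the indicator of
`f(A) = k` as a combination of the values `fall p (p^{f(A)}) (k + i)` for `0 ≤ i ≤ n - k`
(`lagrange_newton`, `indicator_eq_sum_fall`). Summing over `A` gives the formula term by term.

The moments come from Burnside's lemma for `U(n,q)` acting on injective `n × d` matrices
(`burnside`). A group element `A` fixes `fall (q²) ((q²)^{f(A)}) d` of them. By Witt's theorem
(`witt`) the orbits are classified by the Gram matrix, and the Gram matrices that occur are the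
Hermitian `H` of size `d` with `2d ≤ n + rank H`. The number of Hermitian matrices of given rank is
found from the uniqueness of Gram factorisations (`card_hermitian_rank`): it is `(-1)^r c(d,r)`, where
`c(d,r)` is `newtonCoeff p d r`. The same `c(d,r)` are the coefficients of `fall (p²) (x²) d` in the
basis `fall p x (2d - r)` (`fall_sq_eq`). Hence Burnside's lemma becomes a triangular linear system
for the moments, which has a unique solution (`moments_of_burnside`).

The order of `U(d,q)` comes from the same count: summing the numbers of Hermitian matrices over all
ranks gives `q^(d²)`, and an alternating sum of the `c(d,r)` (`alternating_newtonCoeff`) then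
identifies `|U(d,q)|` inductively.
-/

open Matrix

/-- The order of the finite unitary group `U(m,q)` as a rational number:
`q^(m(m-1)/2) ∏_{j=1}^m (q^j - (-1)^j)`. -/
def uOrderQ (q m : ℕ) : ℚ :=
  (q : ℚ) ^ (m * (m - 1) / 2) * ∏ j ∈ Finset.range m, ((q : ℚ) ^ (j + 1) - (-1 : ℚ) ^ (j + 1))

/-! ### Newton interpolation at powers of `p` -/

/-- The `j`-th Newton basis polynomial `∏_{i<j} (x - p^i)` for the nodes `1, p, p², …`. At
`x = p ^ f` with `p` a prime power it counts the injective linear maps from a `j`-dimensional to an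
`f`-dimensional space over the field with `p` elements; below it is also used at `p = -q`. -/
def fall (p x : ℚ) (j : ℕ) : ℚ := ∏ i ∈ Finset.range j, (x - p ^ i)

theorem fall_succ (p x : ℚ) (j : ℕ) : fall p x (j + 1) = fall p x j * (x - p ^ j) :=
  Finset.prod_range_succ _ _

theorem fall_pow_succ (p : ℚ) (a r : ℕ) :
    fall p (p ^ (a + 1)) (r + 1) = (p ^ (a + 1) - 1) * p ^ r * fall p (p ^ a) r := by
  unfold fall
  rw [Finset.prod_range_succ', pow_zero, mul_comm, mul_assoc]
  congr 1
  rw [← Finset.card_range r, ← Finset.prod_const, Finset.card_range, ← Finset.prod_mul_distrib]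
  exact Finset.prod_congr rfl fun i _ => by ring

theorem fall_pow_eq_zero (p : ℚ) {a r : ℕ} (h : a < r) : fall p (p ^ a) r = 0 :=
  Finset.prod_eq_zero (Finset.mem_range.2 h) (sub_self _)

theorem fall_self_ne_zero {p : ℚ} (h0 : p ≠ 0) (h1 : ∀ j, p ^ (j + 1) ≠ 1) (r : ℕ) :
    fall p (p ^ r) r ≠ 0 := by
  induction r with
  | zero => simp [fall]
  | succ r ih =>
    rw [fall_pow_succ]
    exact mul_ne_zero (mul_ne_zero (sub_ne_zero.2 (h1 r)) (pow_ne_zero _ h0)) ih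

/-- The coefficient `c(d,r)` of `fall p x (2d - r)` in the Newton expansion of
`∏_{i<d} (x² - p^{2i})`, see `fall_sq_eq`. For `p = -q`, `(-1)^r c(d,r)` is the number of Hermitian
`d × d` matrices of rank `r`. The denominator is nonzero as soon as no positive power of `p` is
`1`. -/
def newtonCoeff (p : ℚ) (d r : ℕ) : ℚ := fall (p ^ 2) ((p ^ 2) ^ d) r / fall p (p ^ r) r

/-- The recursion in `d` that drives the induction in `fall_sq_eq`: it comes from writing
`x² - p^{2d}` in terms of `x - p^m` and `x - p^{m+1}`, where `m = 2d - r`. -/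
theorem newtonCoeff_rec {p : ℚ} (h0 : p ≠ 0) (h1 : ∀ j, p ^ (j + 1) ≠ 1) {d r : ℕ} (h : r < d) :
    newtonCoeff p (d + 1) (r + 2) = newtonCoeff p d (r + 2)
      + p ^ (2 * d - (r + 1)) * (1 + p) * newtonCoeff p d (r + 1)
      + ((p ^ (2 * d - r)) ^ 2 - (p ^ 2) ^ d) * newtonCoeff p d r := by
  obtain ⟨e, rfl⟩ : ∃ e, d = r + 1 + e := ⟨d - (r + 1), by omega⟩
  have e1 : 2 * (r + 1 + e) - (r + 1) = r + 1 + 2 * e := by omega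
  have e2 : 2 * (r + 1 + e) - r = r + 2 + 2 * e := by omega
  rw [e1, e2]
  unfold newtonCoeff
  rw [fall_pow_succ, fall_pow_succ p (r + 1) (r + 1), fall_pow_succ p r r]
  simp only [fall_succ]
  have g0 := fall_self_ne_zero h0 h1 r
  have g1 : p ^ (r + 1) - 1 ≠ 0 := sub_ne_zero.2 (h1 r)
  have g2 : p ^ (r + 1 + 1) - 1 ≠ 0 := sub_ne_zero.2 (h1 (r + 1))
  have g3 : p ^ r ≠ 0 := pow_ne_zero _ h0
  have g4 : p ^ (r + 1) ≠ 0 := pow_ne_zero _ h0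
  generalize fall p (p ^ r) r = G at *
  generalize fall (p ^ 2) ((p ^ 2) ^ (r + 1 + e)) r = D at *
  field_simp
  ring

/-- Expansion of the Newton polynomial for the base `p²`, taken at `x²`, in the Newton basis for the
base `p`. -/
theorem fall_sq_eq {p : ℚ} (h0 : p ≠ 0) (h1 : ∀ j, p ^ (j + 1) ≠ 1) (x : ℚ) (d : ℕ) :
    fall (p ^ 2) (x ^ 2) d =
      ∑ r ∈ Finset.range (d + 1), newtonCoeff p d r * fall p x (2 * d - r) := by
  induction d with
  | zero => simp [fall, newtonCoeff]
  | succ d ih =>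
    have c0 : ∀ d, newtonCoeff p d 0 = 1 := by intro d; simp [newtonCoeff, fall]
    have hp1 : p - 1 ≠ 0 := sub_ne_zero.2 (by simpa using h1 0)
    have c1 : newtonCoeff p (d + 1) 1 = newtonCoeff p d 1 + p ^ (2 * d) * (1 + p) := by
      simp [newtonCoeff, fall]
      field_simp
      ring
    have hz : newtonCoeff p d (d + 1) = 0 := by
      simp [newtonCoeff, fall_pow_eq_zero (p ^ 2) (Nat.lt_succ_self d)]
    -- multiplying a basis element by `x² - p^{2d}` only involves the next two
    have step : ∀ m, fall p x m * (x ^ 2 - (p ^ 2) ^ d) = fall p x (m + 2)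
        + p ^ m * (1 + p) * fall p x (m + 1) + ((p ^ m) ^ 2 - (p ^ 2) ^ d) * fall p x m := by
      intro m
      simp only [fall_succ]
      ring
    rw [fall_succ, ih, Finset.sum_mul]
    have hs : ∀ r ∈ Finset.range (d + 1),
        newtonCoeff p d r * fall p x (2 * d - r) * (x ^ 2 - (p ^ 2) ^ d) =
        newtonCoeff p d r * fall p x (2 * (d + 1) - r)
        + p ^ (2 * d - r) * (1 + p) * newtonCoeff p d r * fall p x (2 * (d + 1) - (r + 1))
        + ((p ^ (2 * d - r)) ^ 2 - (p ^ 2) ^ d) * newtonCoeff p d r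
          * fall p x (2 * (d + 1) - (r + 2)) := by
      intro r hr
      have := Finset.mem_range.1 hr
      rw [mul_assoc, step, show 2 * (d + 1) - r = 2 * d - r + 2 by omega,
        show 2 * (d + 1) - (r + 1) = 2 * d - r + 1 by omega,
        show 2 * (d + 1) - (r + 2) = 2 * d - r by omega]
      ring
    rw [Finset.sum_congr rfl hs, Finset.sum_add_distrib, Finset.sum_add_distrib]
    have t1 : ∑ r ∈ Finset.range (d + 1), newtonCoeff p d r * fall p x (2 * (d + 1) - r)
        = ∑ r ∈ Finset.range (d + 2), newtonCoeff p d r * fall p x (2 * (d + 1) - r) := by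
      rw [Finset.sum_range_succ _ (d + 1), hz]; ring
    have t3 : (p ^ (2 * d - d)) ^ 2 - (p ^ 2) ^ d = 0 := by
      rw [show 2 * d - d = d by omega]; ring
    rw [t1, Finset.sum_range_succ' _ (d + 1), Finset.sum_range_succ' _ d,
      Finset.sum_range_succ' (fun r => p ^ (2 * d - r) * (1 + p) * newtonCoeff p d r
        * fall p x (2 * (d + 1) - (r + 1))) d,
      Finset.sum_range_succ (fun r => ((p ^ (2 * d - r)) ^ 2 - (p ^ 2) ^ d) * newtonCoeff p d r
          * fall p x (2 * (d + 1) - (r + 2))) d, t3,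
      Finset.sum_range_succ' _ (d + 1), Finset.sum_range_succ' _ d]
    have hr : ∀ r ∈ Finset.range d,
        newtonCoeff p (d + 1) (r + 1 + 1) * fall p x (2 * (d + 1) - (r + 1 + 1)) =
        newtonCoeff p d (r + 1 + 1) * fall p x (2 * (d + 1) - (r + 1 + 1))
        + p ^ (2 * d - (r + 1)) * (1 + p) * newtonCoeff p d (r + 1)
          * fall p x (2 * (d + 1) - (r + 1 + 1))
        + ((p ^ (2 * d - r)) ^ 2 - (p ^ 2) ^ d) * newtonCoeff p d r
          * fall p x (2 * (d + 1) - (r + 2)) := by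
      intro r hr
      rw [newtonCoeff_rec h0 h1 (Finset.mem_range.1 hr)]
      ring
    rw [Finset.sum_congr rfl hr, Finset.sum_add_distrib, Finset.sum_add_distrib]
    simp only [c0, zero_add, c1, Nat.sub_zero]
    ring

/-- For `p = -q` both sides count the Hermitian `d × d` matrices, once `|U(r,q)|` is known for all
`r ≤ d`; the identity itself is purely algebraic, so it can be used to find those orders. -/
theorem alternating_newtonCoeff {p : ℚ} (h0 : p ≠ 0) (h1 : ∀ j, p ^ (j + 1) ≠ 1) (d : ℕ) :
    ∑ r ∈ Finset.range (d + 1), (-1) ^ r * newtonCoeff p d r = (-1) ^ d * p ^ (d ^ 2) := by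
  induction d with
  | zero => simp [fall, newtonCoeff]
  | succ d ih =>
    have hz : newtonCoeff p d (d + 1) = 0 := by
      simp [newtonCoeff, fall_pow_eq_zero (p ^ 2) (Nat.lt_succ_self d)]
    -- passing from `d` to `d + 1` brings in the weighted sum with weights `p⁻ʳ`
    have rec1 : ∀ r, newtonCoeff p (d + 1) (r + 1) = newtonCoeff p d (r + 1)
        + (p ^ 2) ^ d * (p + (p ^ r)⁻¹) * newtonCoeff p d r := by
      intro r
      unfold newtonCoeff
      rw [fall_pow_succ, fall_pow_succ p r r]
      simp only [fall_succ]
      have g0 := fall_self_ne_zero h0 h1 r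
      have g1 : p ^ (r + 1) - 1 ≠ 0 := sub_ne_zero.2 (h1 r)
      have g3 : p ^ r ≠ 0 := pow_ne_zero _ h0
      generalize fall p (p ^ r) r = G at *
      generalize fall (p ^ 2) ((p ^ 2) ^ d) r = D at *
      field_simp
      ring
    have rec2 : ∀ r, newtonCoeff p d r * ((p ^ 2) ^ d * (p ^ r)⁻¹ - 1) =
        newtonCoeff p d (r + 1) * (p ^ (r + 1) - 1) + newtonCoeff p d r * (p ^ r - 1) := by
      intro r
      unfold newtonCoeff
      rw [fall_pow_succ p r r]
      simp only [fall_succ]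
      have g0 := fall_self_ne_zero h0 h1 r
      have g1 : p ^ (r + 1) - 1 ≠ 0 := sub_ne_zero.2 (h1 r)
      have g3 : p ^ r ≠ 0 := pow_ne_zero _ h0
      generalize fall p (p ^ r) r = G at *
      generalize fall (p ^ 2) ((p ^ 2) ^ d) r = D at *
      field_simp
      ring
    -- the sum with weights `p⁻ʳ` telescopes
    have tel : ∀ N, ∑ r ∈ Finset.range N, (-1) ^ r * (newtonCoeff p d r *
        ((p ^ 2) ^ d * (p ^ r)⁻¹ - 1)) = -(-1) ^ N * (newtonCoeff p d N * (p ^ N - 1)) := by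
      intro N
      induction N with
      | zero => simp
      | succ N ihN => rw [Finset.sum_range_succ, ihN, rec2]; ring
    have tel' := tel (d + 1)
    rw [hz, zero_mul, mul_zero] at tel'
    have e1 : ∑ r ∈ Finset.range (d + 1), (-1 : ℚ) ^ r * newtonCoeff p d r =
        ∑ r ∈ Finset.range (d + 1), (-1 : ℚ) ^ (r + 1) * newtonCoeff p d (r + 1)
          + newtonCoeff p d 0 := by
      have := Finset.sum_range_succ (fun r => (-1 : ℚ) ^ r * newtonCoeff p d r) (d + 1)
      rw [hz, mul_zero, add_zero] at this
      rw [← this, Finset.sum_range_succ']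
      simp
    have c0 : ∀ d, newtonCoeff p d 0 = 1 := by intro d; simp [newtonCoeff, fall]
    have e2 : ∀ r, (-1 : ℚ) ^ (r + 1) * newtonCoeff p (d + 1) (r + 1) =
        (-1 : ℚ) ^ (r + 1) * newtonCoeff p d (r + 1)
        - (p ^ 2) ^ d * p * ((-1) ^ r * newtonCoeff p d r)
        - (-1) ^ r * (newtonCoeff p d r * ((p ^ 2) ^ d * (p ^ r)⁻¹ - 1))
        - (-1) ^ r * newtonCoeff p d r := by
      intro r; rw [rec1]; ring
    rw [Finset.sum_range_succ', Finset.sum_congr rfl fun r _ => e2 r]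
    simp only [Finset.sum_sub_distrib, ← Finset.mul_sum]
    rw [tel', c0]
    rw [c0] at e1
    have : ∑ r ∈ Finset.range (d + 1), (-1 : ℚ) ^ (r + 1) * newtonCoeff p d (r + 1) =
      ∑ r ∈ Finset.range (d + 1), (-1 : ℚ) ^ r * newtonCoeff p d r - 1 := by rw [e1]; ring
    rw [this, ih]
    ring

/-- Newton form of the Lagrange basis polynomial `L_k` for the nodes `x 0, …, x (k + m)`: its
expansion in the products `∏_{l<k+i} (y - x l)`. The terms below degree `k` vanish because `L_k`
vanishes at `x 0, …, x (k - 1)`. -/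
theorem lagrange_newton (x : ℕ → ℚ) (hx : Function.Injective x) (y : ℚ) (k m : ℕ) :
    ∑ i ∈ Finset.range (m + 1), (∏ l ∈ Finset.range (k + i), (y - x l)) /
      ((∏ l ∈ Finset.range k, (x k - x l)) * ∏ l ∈ Finset.range i, (x k - x (k + 1 + l)))
    = (∏ l ∈ Finset.range k, (y - x l)) * (∏ l ∈ Finset.range m, (y - x (k + 1 + l))) /
      ((∏ l ∈ Finset.range k, (x k - x l)) * ∏ l ∈ Finset.range m, (x k - x (k + 1 + l))) := by
  have hA : (∏ l ∈ Finset.range k, (x k - x l)) ≠ 0 :=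
    Finset.prod_ne_zero_iff.2 fun l hl => sub_ne_zero.2 fun h => by
      have := hx h; have := Finset.mem_range.1 hl; omega
  have hB : ∀ m, (∏ l ∈ Finset.range m, (x k - x (k + 1 + l))) ≠ 0 := fun m =>
    Finset.prod_ne_zero_iff.2 fun l hl => sub_ne_zero.2 fun h => by
      have := hx h; omega
  have hC : ∀ m, ∏ l ∈ Finset.range (k + (m + 1)), (y - x l) =
      (∏ l ∈ Finset.range k, (y - x l)) * (y - x k) *
        ∏ l ∈ Finset.range m, (y - x (k + 1 + l)) := by
    intro m
    rw [show k + (m + 1) = k + 1 + m by ring, Finset.prod_range_add, Finset.prod_range_succ]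
  induction m with
  | zero => simp
  | succ m ih =>
    have h1 := hB m
    have h2 := hB (m + 1)
    rw [Finset.sum_range_succ, ih, hC]
    rw [Finset.prod_range_succ] at h2
    have h3 := right_ne_zero_of_mul h2
    simp only [Finset.prod_range_succ _ m]
    field_simp
    ring

/-! ### The quadratic extension -/

section field
variable {F : Type} [Field F] [Fintype F] [StarRing F] {q : ℕ}

/-- The fixed points of `x ↦ x^q` are roots of `X^q - X`, so there are at most `q < q²` of them. -/
theorem exists_star_ne (hs : ∀ x : F, star x = x ^ q) (hF : Fintype.card F = q ^ 2)
    (hq : 2 ≤ q) : ∃ z : F, star z ≠ z := by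
  classical
  by_contra! h
  have hroots : (Finset.univ : Finset F) ⊆
      (Polynomial.X ^ q - Polynomial.X : Polynomial F).roots.toFinset := by
    intro x _
    rw [Multiset.mem_toFinset, Polynomial.mem_roots (FiniteField.X_pow_card_sub_X_ne_zero F hq)]
    simp [Polynomial.IsRoot, ← hs, h]
  have h1 := Finset.card_le_card hroots
  have h2 := Multiset.toFinset_card_le (Polynomial.X ^ q - Polynomial.X : Polynomial F).roots
  have h3 := Polynomial.card_roots' (Polynomial.X ^ q - Polynomial.X : Polynomial F)
  rw [FiniteField.X_pow_card_sub_X_natDegree_eq F hq] at h3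
  rw [Finset.card_univ, hF] at h1
  nlinarith

theorem exists_trace_ne (hs : ∀ x : F, star x = x ^ q) (hF : Fintype.card F = q ^ 2)
    (hq : 2 ≤ q) : ∃ z : F, z + star z ≠ 0 := by
  by_contra! h
  obtain ⟨z, hz⟩ := exists_star_ne hs hF hq
  have h1 := h 1
  rw [star_one] at h1
  apply hz
  have := h z
  linear_combination this - z * h1

theorem exists_trace_eq (hs : ∀ x : F, star x = x ^ q) (hF : Fintype.card F = q ^ 2)
    (hq : 2 ≤ q) {a : F} (ha : star a = a) : ∃ z : F, z + star z = a := by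
  obtain ⟨z, hz⟩ := exists_trace_ne hs hF hq
  have ht : star (z + star z) = z + star z := by rw [star_add, star_star, add_comm]
  refine ⟨z * (a / (z + star z)), ?_⟩
  have : star (a / (z + star z)) = a / (z + star z) := by rw [star_div₀, ha, ht]
  rw [star_mul, this]
  field_simp

/-- In the cyclic group `Fˣ` of order `q² - 1`, the elements killed by `q - 1` are the
`(q + 1)`-st powers, so every element fixed by conjugation is a norm. -/
theorem exists_star_mul_self_eq (hs : ∀ x : F, star x = x ^ q) (hF : Fintype.card F = q ^ 2)
    (hq : 2 ≤ q) {a : F} (ha : star a = a) : ∃ z : F, star z * z = a := by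
  classical
  by_cases h0 : a = 0
  · exact ⟨0, by simp [h0]⟩
  obtain ⟨g, hg⟩ := IsCyclic.exists_generator (α := Fˣ)
  obtain ⟨m, hm⟩ := (Submonoid.mem_powers_iff _ _).1
    ((mem_powers_iff_mem_zpowers).2 (hg (Units.mk0 a h0)))
  have ho : orderOf g = q ^ 2 - 1 := by
    rw [orderOf_eq_card_of_forall_mem_zpowers hg, Nat.card_eq_fintype_card, Fintype.card_units, hF]
  have h1 : g ^ (m * (q - 1)) = 1 := by
    rw [pow_mul, hm]
    ext
    have : a ^ (q - 1) * a = 1 * a := by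
      rw [← pow_succ, Nat.sub_add_cancel (by omega), ← hs, ha, one_mul]
    simpa using mul_right_cancel₀ h0 this
  have h2 := orderOf_dvd_of_pow_eq_one h1
  rw [ho, show q ^ 2 - 1 = (q + 1) * (q - 1) by simpa using Nat.sq_sub_sq q 1] at h2
  obtain ⟨c, rfl⟩ := Nat.dvd_of_mul_dvd_mul_right (by omega) h2
  refine ⟨((g ^ c : Fˣ) : F), ?_⟩
  rw [hs, ← pow_succ, ← Units.val_pow_eq_pow_val, ← pow_mul, mul_comm c, hm, Units.val_mk0]

end field

/-- If `star z ≠ z`, every matrix is uniquely `A + z • B` with `A`, `B` Hermitian, so the number of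
Hermitian matrices is the square root of the number of all matrices. -/
theorem card_hermitian {F : Type} [Field F] [Fintype F] [StarRing F] {q : ℕ}
    (hs : ∀ x : F, star x = x ^ q) (hF : Fintype.card F = q ^ 2) (hq : 2 ≤ q) (d : ℕ) :
    Nat.card {H : Matrix (Fin d) (Fin d) F // H.IsHermitian} = q ^ (d ^ 2) := by
  obtain ⟨z, hz⟩ := exists_star_ne hs hF hq
  have hz' : z - star z ≠ 0 := sub_ne_zero.2 (Ne.symm hz)
  let f : {H : Matrix (Fin d) (Fin d) F // H.IsHermitian} ×
      {H : Matrix (Fin d) (Fin d) F // H.IsHermitian} → Matrix (Fin d) (Fin d) F :=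
    fun p => p.1.1 + z • p.2.1
  have hf : Function.Bijective f := by
    constructor
    · rintro ⟨⟨a, ha⟩, ⟨b, hb⟩⟩ ⟨⟨a', ha'⟩, ⟨b', hb'⟩⟩ h
      have h1 : a + z • b = a' + z • b' := h
      have h2 := congrArg conjTranspose h1
      simp only [conjTranspose_add, conjTranspose_smul, ha.eq, hb.eq, ha'.eq, hb'.eq] at h2
      have h3 : (z - star z) • (b - b') = 0 := by
        have : (z - star z) • (b - b') = (a + z • b) - (a' + z • b')
          - ((a + star z • b) - (a' + star z • b')) := by module
        rw [this, h1, h2]; simp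
      have h4 : b = b' := sub_eq_zero.1 ((smul_eq_zero.1 h3).resolve_left hz')
      subst h4
      have h5 : a = a' := add_right_cancel h1
      subst h5
      rfl
    · intro X
      have hb : ((z - star z)⁻¹ • (X - Xᴴ)).IsHermitian := by
        rw [Matrix.IsHermitian, conjTranspose_smul, conjTranspose_sub, conjTranspose_conjTranspose,
          star_inv₀, star_sub, star_star, ← neg_sub z, ← neg_sub X, inv_neg, neg_smul_neg]
      have ha : (X - z • ((z - star z)⁻¹ • (X - Xᴴ))).IsHermitian := by
        rw [Matrix.IsHermitian, conjTranspose_sub, conjTranspose_smul, hb.eq]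
        have : (z - star z) • ((z - star z)⁻¹ • (X - Xᴴ)) = X - Xᴴ := smul_inv_smul₀ hz' _
        rw [sub_smul] at this
        generalize (z - star z)⁻¹ • (X - Xᴴ) = Y at this ⊢
        rw [← sub_eq_zero, show Xᴴ - star z • Y - (X - z • Y) =
          (z • Y - star z • Y) - (X - Xᴴ) by abel, this, sub_self]
      exact ⟨(⟨_, ha⟩, ⟨_, hb⟩), by simp [f]⟩
  have h1 := Nat.card_congr (Equiv.ofBijective f hf)
  rw [Nat.card_prod, show Nat.card (Matrix (Fin d) (Fin d) F) = Nat.card (Fin d → Fin d → F) from rfl,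
    Nat.card_fun, Nat.card_fun, Nat.card_fin] at h1
  have h2 : ((q ^ 2) ^ d) ^ d = q ^ d ^ 2 * q ^ d ^ 2 := by ring
  rw [Nat.card_eq_fintype_card (α := F), hF, h2] at h1
  exact Nat.mul_self_inj.1 h1

/-! ### Hermitian forms and Witt's theorem -/

section linalg
variable {F : Type} [Field F]

theorem exists_left_inv_iff {m ι : Type} [Fintype m] [Fintype ι] [DecidableEq ι]
    (T : Matrix m ι F) : (∃ L : Matrix ι m F, L * T = 1) ↔ ∀ x, T *ᵥ x = 0 → x = 0 := by
  classical
  constructor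
  · rintro ⟨L, hL⟩ x hx
    have := congrArg (L *ᵥ ·) hx
    simpa [hL] using this
  · intro h
    obtain ⟨g, hg⟩ := LinearMap.exists_leftInverse_of_injective (Matrix.toLin' T)
      (LinearMap.ker_eq_bot'.2 fun x hx => h x (by simpa using hx))
    refine ⟨LinearMap.toMatrix' g, ?_⟩
    have := congrArg LinearMap.toMatrix' hg
    rwa [LinearMap.toMatrix'_comp, LinearMap.toMatrix'_toLin', LinearMap.toMatrix'_id] at this

theorem exists_right_inv_iff {m ι : Type} [Fintype m] [Fintype ι] [DecidableEq m]
    (T : Matrix m ι F) :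
    (∃ R : Matrix ι m F, T * R = 1) ↔ LinearIndependent F (fun i => T i) := by
  have h1 : (∃ R : Matrix ι m F, T * R = 1) ↔ (∃ L : Matrix m ι F, L * Tᵀ = 1) := by
    constructor
    · rintro ⟨R, hR⟩
      exact ⟨Rᵀ, by rw [← transpose_mul, hR, transpose_one]⟩
    · rintro ⟨R, hR⟩
      exact ⟨Rᵀ, by rw [← transpose_inj, transpose_mul, transpose_transpose, hR, transpose_one]⟩
  rw [h1, exists_left_inv_iff, Fintype.linearIndependent_iff]
  constructor
  · intro h g hg
    have := h g (by
      ext j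
      have := congrFun hg j
      simp only [Finset.sum_apply, Pi.smul_apply, smul_eq_mul, Pi.zero_apply] at this
      simpa [mulVec, dotProduct, mul_comm] using this)
    simp [this]
  · intro h g hg
    funext i
    refine h g ?_ i
    ext j
    have := congrFun hg j
    simpa [mulVec, dotProduct, mul_comm] using this

variable [StarRing F]

theorem star_star_dotProduct {ι : Type} [Fintype ι] (x y : ι → F) :
    star (star x ⬝ᵥ y) = star y ⬝ᵥ x := by
  rw [← star_dotProduct_star, star_star]

/-- A nonzero Hermitian form represents `1`: by polarisation it takes a nonzero value, which can be
scaled to `1` because every fixed element is a norm. -/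
theorem exists_hermitian_form_eq_one (ht : ∃ z : F, z + star z ≠ 0)
    (hn : ∀ a : F, star a = a → ∃ z : F, star z * z = a)
    {ι : Type} [Fintype ι] {H : Matrix ι ι F} (hH : H.IsHermitian) (h0 : H ≠ 0) :
    ∃ x, star x ⬝ᵥ (H *ᵥ x) = 1 := by
  have hstar : ∀ x y : ι → F, star (star x ⬝ᵥ (H *ᵥ y)) = star y ⬝ᵥ (H *ᵥ x) := by
    intro x y
    rw [star_star_dotProduct, star_mulVec, hH.eq, ← dotProduct_mulVec]
  suffices h : ∃ x, star x ⬝ᵥ (H *ᵥ x) ≠ 0 by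
    obtain ⟨x, hx⟩ := h
    obtain ⟨z, hz⟩ := hn (star x ⬝ᵥ (H *ᵥ x))⁻¹ (by rw [star_inv₀, hstar])
    refine ⟨z • x, ?_⟩
    rw [star_smul, mulVec_smul, smul_dotProduct, dotProduct_smul, smul_eq_mul, smul_eq_mul,
      ← mul_assoc, hz, inv_mul_cancel₀ hx]
  by_contra! h
  apply h0
  obtain ⟨z, hz⟩ := ht
  have key : ∀ x y, star x ⬝ᵥ (H *ᵥ y) = 0 := by
    intro x y
    by_contra hb
    apply hz
    -- polarisation: the form vanishes at `x + c y`, where `c = z / ⟨x, y⟩`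
    have h1 := h (x + (z / (star x ⬝ᵥ (H *ᵥ y))) • y)
    rw [star_add, mulVec_add, add_dotProduct, dotProduct_add, dotProduct_add, h, star_smul,
      mulVec_smul, smul_dotProduct, smul_dotProduct, dotProduct_smul, dotProduct_smul, h,
      ← hstar x y] at h1
    simp only [smul_eq_mul, zero_add, mul_zero, add_zero] at h1
    rwa [← star_mul', div_mul_cancel₀ _ hb] at h1
  classical
  ext i j
  have := key (Pi.single i 1) (Pi.single j 1)
  simpa [← Pi.single_star] using this

/-- Every Hermitian matrix of rank at most `r` is a Gram matrix of vectors in `F^r`. If `H`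
represents `1` at `x` and `w = H x`, then `H - w wᴴ` has smaller rank, since its kernel contains
`ker H` and also `x`. -/
theorem exists_gram_of_rank_le (ht : ∃ z : F, z + star z ≠ 0)
    (hn : ∀ a : F, star a = a → ∃ z : F, star z * z = a)
    {ι : Type} [Fintype ι] (r : ℕ) (H : Matrix ι ι F) (hH : H.IsHermitian) (hr : H.rank ≤ r) :
    ∃ T : Matrix (Fin r) ι F, Tᴴ * T = H := by
  classical
  induction r generalizing H with
  | zero =>
    have : H = 0 := by
      have h1 : LinearMap.range H.mulVecLin = ⊥ := by
        apply Submodule.finrank_eq_zero.1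
        exact Nat.le_zero.1 hr
      have h2 := LinearMap.range_eq_bot.1 h1
      ext i j
      have h3 := congrFun (LinearMap.congr_fun h2 (Pi.single j 1)) i
      simpa using h3
    exact ⟨0, by simp [this]⟩
  | succ r ih =>
    by_cases h0 : H = 0
    · exact ⟨0, by simp [h0]⟩
    obtain ⟨x, hx⟩ := exists_hermitian_form_eq_one ht hn hH h0
    set w := H *ᵥ x with hw
    have hw' : ∀ z, star w ⬝ᵥ z = star x ⬝ᵥ (H *ᵥ z) := by
      intro z
      rw [hw, star_mulVec, hH.eq, dotProduct_mulVec]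
    have hH' : (H - vecMulVec w (star w)).IsHermitian := by
      apply hH.sub
      rw [Matrix.IsHermitian, conjTranspose_vecMulVec, star_star]
    have hmul : ∀ z, (H - vecMulVec w (star w)) *ᵥ z = H *ᵥ z - (star w ⬝ᵥ z) • w := by
      intro z
      rw [sub_mulVec, vecMulVec_mulVec, op_smul_eq_smul]
    have hk : LinearMap.ker H.mulVecLin < LinearMap.ker (H - vecMulVec w (star w)).mulVecLin := by
      refine lt_of_le_of_ne ?_ ?_
      · intro z hz
        have hz' : H *ᵥ z = 0 := by simpa using hz
        rw [LinearMap.mem_ker, mulVecLin_apply, hmul, hw', hz']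
        simp
      · intro h
        have : x ∈ LinearMap.ker (H - vecMulVec w (star w)).mulVecLin := by
          rw [LinearMap.mem_ker, mulVecLin_apply, hmul, hw', hx, one_smul, ← hw, sub_self]
        rw [← h, LinearMap.mem_ker, mulVecLin_apply, ← hw] at this
        rw [this] at hx
        simp at hx
    have h1 := Submodule.finrank_lt_finrank_of_lt hk
    have h2 := LinearMap.finrank_range_add_finrank_ker H.mulVecLin
    have h3 := LinearMap.finrank_range_add_finrank_ker (H - vecMulVec w (star w)).mulVecLin
    have h4 : (H - vecMulVec w (star w)).rank ≤ r := by
      unfold Matrix.rank at hr ⊢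
      omega
    obtain ⟨T, hT⟩ := ih _ hH' h4
    refine ⟨Matrix.of (Fin.cons (star w) T), ?_⟩
    ext i j
    have := congrFun (congrFun hT i) j
    rw [mul_apply] at this
    simp only [conjTranspose_apply, Matrix.sub_apply, vecMulVec_apply, Pi.star_apply] at this
    rw [mul_apply, Fin.sum_univ_succ]
    show star (star w i) * star w j + ∑ x, star (T x i) * T x j = H i j
    rw [this, Pi.star_apply, Pi.star_apply, star_star]
    ring

/-- One step of Witt's extension theorem. Given a Gram matrix `H`, there are values `b`, `c`
depending on `H` only such that any injective `T` with Gram matrix `H` can be enlarged by a new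
column `v` having inner products `b` with the columns of `T` and `c` with itself. If `H` is
degenerate, `v` is paired nontrivially with the radical; otherwise `v` is a unit vector orthogonal
to the columns of `T`. -/
theorem witt_step (ht : ∀ a : F, star a = a → ∃ z : F, z + star z = a) (ht' : ∃ z : F, z + star z ≠ 0)
    (hn : ∀ a : F, star a = a → ∃ z : F, star z * z = a)
    {m ι : Type} [Fintype m] [Fintype ι] [DecidableEq m] [DecidableEq ι]
    (hc : Fintype.card ι < Fintype.card m) (H : Matrix ι ι F) :
    ∃ (b : ι → F) (c : F), ∀ T : Matrix m ι F, (∃ L : Matrix ι m F, L * T = 1) → Tᴴ * T = H →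
      ∃ v, Tᴴ *ᵥ v = b ∧ star v ⬝ᵥ v = c ∧ ∀ x, T *ᵥ x ≠ v := by
  have hsurj : ∀ T : Matrix m ι F, (∃ L : Matrix ι m F, L * T = 1) → ∀ b, ∃ v, Tᴴ *ᵥ v = b := by
    rintro T ⟨L, hL⟩ b
    refine ⟨Lᴴ *ᵥ b, ?_⟩
    rw [mulVec_mulVec, ← conjTranspose_mul, hL, conjTranspose_one, one_mulVec]
  by_cases hinj : ∃ y, y ≠ 0 ∧ H *ᵥ y = 0
  · obtain ⟨y, hy0, hy⟩ := hinj
    obtain ⟨i, hi⟩ := Function.ne_iff.1 hy0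
    -- `v` lies off the range of `T` since it pairs nontrivially with the radical vector `T y`
    refine ⟨Pi.single i 1, 0, fun T hT hTH => ?_⟩
    have hyH : star y ᵥ* H = 0 := by
      have hH : H.IsHermitian := by rw [← hTH]; exact isHermitian_conjTranspose_mul_self T
      rw [← hH.eq, ← star_mulVec, hy, star_zero]
    obtain ⟨v, hv⟩ := hsurj T hT (Pi.single i 1)
    have hp : star (T *ᵥ y) ⬝ᵥ v = star (y i) := by
      rw [star_mulVec, ← dotProduct_mulVec, hv]
      simp
    have hp0 : star (y i) ≠ 0 := star_ne_zero.2 hi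
    obtain ⟨z, hz⟩ := ht (-(star v ⬝ᵥ v)) (by rw [star_neg, star_star_dotProduct])
    have hTT : star (T *ᵥ y) ⬝ᵥ (T *ᵥ y) = 0 := by
      rw [star_mulVec, ← dotProduct_mulVec, mulVec_mulVec, hTH, hy, dotProduct_zero]
    have hp' : star v ⬝ᵥ (T *ᵥ y) = y i := by
      have := congrArg star hp
      rwa [star_star, star_star_dotProduct] at this
    have hv' : Tᴴ *ᵥ (v + (z / y i) • (T *ᵥ y)) = Pi.single i 1 := by
      rw [mulVec_add, mulVec_smul, mulVec_mulVec, hTH, hy, hv, smul_zero, add_zero]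
    refine ⟨_, hv', ?_, ?_⟩
    · rw [star_add, star_smul, add_dotProduct, dotProduct_add, dotProduct_add, smul_dotProduct,
        smul_dotProduct, dotProduct_smul, dotProduct_smul, hTT, hp, hp', star_div₀]
      simp only [smul_eq_mul, mul_zero, add_zero]
      rw [div_mul_cancel₀ _ hp0, div_mul_cancel₀ _ hi]
      linear_combination hz
    · intro x hx
      rw [← hx, mulVec_mulVec, hTH] at hv'
      have := congrArg (star y ⬝ᵥ ·) hv'
      simp only [dotProduct_mulVec, hyH, zero_dotProduct, dotProduct_single, mul_one] at this
      exact hp0 this.symm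
  · push Not at hinj
    -- project onto the orthogonal complement of the range of `T`
    refine ⟨0, 1, fun T hT hTH => ?_⟩
    have hH : H.IsHermitian := by rw [← hTH]; exact isHermitian_conjTranspose_mul_self T
    obtain ⟨K, hK⟩ := (exists_left_inv_iff H).2 fun x hx => by
      by_contra h; exact hinj x h hx
    have hK' : H * K = 1 := mul_eq_one_comm.1 hK
    have hKH : Kᴴ = K := by
      have : Kᴴ * H = 1 := by rw [← hH.eq, ← conjTranspose_mul, hK', conjTranspose_one]
      calc Kᴴ = Kᴴ * (H * K) := by rw [hK', Matrix.mul_one]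
        _ = K := by rw [← Matrix.mul_assoc, this, Matrix.one_mul]
    set P := 1 - T * K * Tᴴ with hP
    have hPH : P.IsHermitian := by
      rw [Matrix.IsHermitian, hP, conjTranspose_sub, conjTranspose_mul, conjTranspose_mul, hKH,
        conjTranspose_conjTranspose, conjTranspose_one, Matrix.mul_assoc]
    have hTP : Tᴴ * P = 0 := by
      rw [hP, Matrix.mul_sub, Matrix.mul_one, ← Matrix.mul_assoc, ← Matrix.mul_assoc, hTH, hK', Matrix.one_mul, sub_self]
    have hPP : P * P = P := by
      conv_lhs => rw [hP, Matrix.sub_mul, Matrix.one_mul, Matrix.mul_assoc (T * K), hTP, Matrix.mul_zero, sub_zero]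
    have hP0 : P ≠ 0 := by
      intro h0
      rw [hP, sub_eq_zero] at h0
      have h1 : (1 : Matrix m m F).rank ≤ T.rank := by
        rw [h0, Matrix.mul_assoc]; exact rank_mul_le_left _ _
      rw [rank_one] at h1
      have := T.rank_le_card_width
      omega
    obtain ⟨x, hx⟩ := exists_hermitian_form_eq_one ht' hn hPH hP0
    have hTx : Tᴴ *ᵥ (P *ᵥ x) = 0 := by rw [mulVec_mulVec, hTP, zero_mulVec]
    have hxx : star (P *ᵥ x) ⬝ᵥ (P *ᵥ x) = 1 := by
      rw [star_mulVec, hPH.eq, ← dotProduct_mulVec, mulVec_mulVec, hPP, hx]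
    refine ⟨P *ᵥ x, hTx, hxx, fun y hy => ?_⟩
    have hy0 : y = 0 := by
      by_contra h
      apply hinj y h
      rw [← hTH, ← mulVec_mulVec, hy, hTx]
    rw [← hy, hy0, mulVec_zero, dotProduct_zero] at hxx
    exact zero_ne_one hxx

/-- Witt's theorem: two injective matrices with the same Gram matrix differ by a unitary matrix.
Both are enlarged column by column, keeping the Gram matrices equal, until they are square. -/
theorem witt (ht : ∀ a : F, star a = a → ∃ z : F, z + star z = a) (ht' : ∃ z : F, z + star z ≠ 0)
    (hn : ∀ a : F, star a = a → ∃ z : F, star z * z = a)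
    {m : Type} [Fintype m] [DecidableEq m] (e : ℕ) : ∀ (ι : Type) [Fintype ι] [DecidableEq ι],
    Fintype.card ι + e = Fintype.card m → ∀ (T T' : Matrix m ι F),
    (∃ L : Matrix ι m F, L * T = 1) → (∃ L : Matrix ι m F, L * T' = 1) → Tᴴ * T = T'ᴴ * T' →
    ∃ A : Matrix m m F, A * Aᴴ = 1 ∧ A * T = T' := by
  induction e with
  | zero =>
    intro ι _ _ hc T T' ⟨L, hL⟩ hT' h
    have hL' : T * L = 1 := (mul_eq_one_comm_of_card_eq _ _ _ (by simpa using hc)).1 hL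
    refine ⟨T' * L, ?_, by rw [Matrix.mul_assoc, hL, Matrix.mul_one]⟩
    rw [mul_eq_one_comm, conjTranspose_mul, Matrix.mul_assoc, ← Matrix.mul_assoc T'ᴴ, ← h, Matrix.mul_assoc Tᴴ, hL',
      Matrix.mul_one, ← conjTranspose_mul, hL', conjTranspose_one]
  | succ e ih =>
    intro ι _ _ hc T T' hT hT' h
    obtain ⟨b, c, hbc⟩ := witt_step ht ht' hn (m := m) (by omega) (T'ᴴ * T')
    obtain ⟨v, hv1, hv2, hv3⟩ := hbc T hT h
    obtain ⟨v', hv1', hv2', hv3'⟩ := hbc T' hT' rfl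
    have ext_inj : ∀ (T : Matrix m ι F) (v : m → F), (∃ L : Matrix ι m F, L * T = 1) →
        (∀ x, T *ᵥ x ≠ v) →
        ∃ L : Matrix (ι ⊕ Unit) m F, L * fromCols T (replicateCol Unit v) = 1 := by
      intro T v hT hv
      rw [exists_left_inv_iff] at hT ⊢
      intro x hx
      rw [← Sum.elim_comp_inl_inr x, fromCols_mulVec_sumElim] at hx
      have hcol : replicateCol Unit v *ᵥ (x ∘ Sum.inr) = x (Sum.inr ()) • v := by
        ext i; simp [mulVec, dotProduct, mul_comm]
      rw [hcol] at hx
      have hx0 : x (Sum.inr ()) = 0 := by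
        by_contra hne
        apply hv ((-(x (Sum.inr ()))⁻¹) • (x ∘ Sum.inl))
        rw [mulVec_smul, eq_neg_of_add_eq_zero_left hx, smul_neg, neg_smul, neg_neg,
          inv_smul_smul₀ hne]
      rw [hx0, zero_smul, add_zero] at hx
      have := hT _ hx
      funext i
      rcases i with i | i
      · exact congrFun this i
      · exact hx0
    have gram : ∀ (T : Matrix m ι F) (v : m → F),
        (fromCols T (replicateCol Unit v))ᴴ * fromCols T (replicateCol Unit v) =
        fromBlocks (Tᴴ * T) (replicateCol Unit (Tᴴ *ᵥ v)) (replicateCol Unit (Tᴴ *ᵥ v))ᴴ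
          (Matrix.of fun _ _ => star v ⬝ᵥ v) := by
      intro T v
      rw [conjTranspose_fromCols_eq_fromRows_conjTranspose, fromRows_mul_fromCols]
      congr 1
      ext i j
      simp [mul_apply, mulVec, dotProduct, mul_comm]
    obtain ⟨A, hA, hAT⟩ := ih (ι ⊕ Unit) (by simp; omega) _ _ (ext_inj T v hT hv3)
      (ext_inj T' v' hT' hv3') (by rw [gram, gram, hv1, hv1', hv2, hv2', h])
    refine ⟨A, hA, ?_⟩
    rw [mul_fromCols] at hAT
    exact (fromCols_inj hAT).1

end linalg

/-! ### Hermitian matrices of given rank -/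

section count
variable {F : Type} [Field F] [Fintype F]

theorem card_linearIndependent_eq_fall {V : Type} [AddCommGroup V] [Module F V] [Finite V]
    (k : ℕ) : (Nat.card {s : Fin k → V // LinearIndependent F s} : ℚ) =
      fall (Fintype.card F) ((Fintype.card F : ℚ) ^ Module.finrank F V) k := by
  by_cases hk : k ≤ Module.finrank F V
  · rw [card_linearIndependent hk, fall, Nat.cast_prod, Finset.prod_range]
    refine Finset.prod_congr rfl fun i _ => ?_
    rw [Nat.cast_sub (Nat.pow_le_pow_right Fintype.card_pos (i.2.le.trans hk))]
    simp
  · rw [fall_pow_eq_zero _ (not_le.1 hk)]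
    have : IsEmpty {s : Fin k → V // LinearIndependent F s} :=
      ⟨fun s => hk (by simpa using s.2.fintype_card_le_finrank)⟩
    simp

theorem card_right_inv (d r : ℕ) :
    (Nat.card {T : Matrix (Fin r) (Fin d) F // ∃ R : Matrix (Fin d) (Fin r) F, T * R = 1} : ℚ) =
      fall (Fintype.card F) ((Fintype.card F : ℚ) ^ d) r := by
  have := card_linearIndependent_eq_fall (F := F) (V := Fin d → F) r
  rw [Module.finrank_fin_fun] at this
  rw [← this]
  congr 1
  exact Nat.card_congr (Equiv.subtypeEquivRight fun T => exists_right_inv_iff T)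

variable [StarRing F]

theorem rank_gram {m ι : Type} [Fintype m] [Fintype ι] [DecidableEq m] (T : Matrix m ι F)
    (hT : ∃ R : Matrix ι m F, T * R = 1) : (Tᴴ * T).rank = Fintype.card m := by
  obtain ⟨R, hR⟩ := hT
  apply le_antisymm
  · exact (rank_mul_le_right _ _).trans T.rank_le_card_height
  · have h1 : Rᴴ * (Tᴴ * T) * R = 1 := by
      rw [← Matrix.mul_assoc, ← conjTranspose_mul, hR, conjTranspose_one, Matrix.one_mul, hR]
    have h2 := (rank_mul_le_left (Rᴴ * (Tᴴ * T)) R).trans (rank_mul_le_right _ _)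
    rwa [h1, rank_one] at h2

theorem exists_right_inv_of_rank {m ι : Type} [Fintype m] [Fintype ι] [DecidableEq m]
    [DecidableEq ι] (T : Matrix m ι F) (hT : T.rank = Fintype.card m) :
    ∃ R : Matrix ι m F, T * R = 1 := by
  rw [exists_right_inv_iff]
  exact (Matrix.rank_eq_finrank_span_row T ▸ hT : _) |> fun h =>
    linearIndependent_iff_card_eq_finrank_span.2 h.symm

/-- Each Hermitian `H` of rank `r` has a Gram factorisation `H = TᴴT` with `T` of size `r × d` and
full rank, and such a `T` is unique up to left multiplication by `U(r,q)`. -/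
theorem card_hermitian_rank (ht : ∃ z : F, z + star z ≠ 0)
    (hn : ∀ a : F, star a = a → ∃ z : F, star z * z = a) (d r : ℕ) :
    Nat.card {H : Matrix (Fin d) (Fin d) F // H.IsHermitian ∧ H.rank = r} *
      Nat.card (unitaryGroup (Fin r) F) =
    Nat.card {T : Matrix (Fin r) (Fin d) F // ∃ R : Matrix (Fin d) (Fin r) F, T * R = 1} := by
  have hex : ∀ H : {H : Matrix (Fin d) (Fin d) F // H.IsHermitian ∧ H.rank = r},
      ∃ T : Matrix (Fin r) (Fin d) F, Tᴴ * T = H := fun H =>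
    exists_gram_of_rank_le ht hn r H.1 H.2.1 H.2.2.le
  choose T hT using hex
  have hTR : ∀ H, ∃ R : Matrix (Fin d) (Fin r) F, T H * R = 1 := fun H => by
    apply exists_right_inv_of_rank
    apply le_antisymm (rank_le_card_height _)
    rw [Fintype.card_fin]
    conv_lhs => rw [← H.2.2, ← hT H]
    exact rank_mul_le_right _ _
  rw [← Nat.card_prod]
  refine Nat.card_eq_of_bijective (fun x => ⟨x.2.1 * T x.1, ?_⟩) ⟨?_, ?_⟩
  · obtain ⟨R, hR⟩ := hTR x.1
    refine ⟨R * star x.2.1, ?_⟩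
    rw [Matrix.mul_assoc, ← Matrix.mul_assoc (T x.1), hR, Matrix.one_mul]
    exact mem_unitaryGroup_iff.1 x.2.2
  · rintro ⟨H, A⟩ ⟨H', A'⟩ h
    have h : A.1 * T H = A'.1 * T H' := congrArg Subtype.val h
    have hg : ∀ (H) (A : unitaryGroup (Fin r) F), (A.1 * T H)ᴴ *
        (A.1 * T H) = H := by
      intro H A
      have hA := mem_unitaryGroup_iff'.1 A.2
      rw [star_eq_conjTranspose] at hA
      rw [conjTranspose_mul, Matrix.mul_assoc, ← Matrix.mul_assoc _ _ (T H), hA, Matrix.one_mul, hT]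
    have hH : H = H' := by
      apply Subtype.ext
      rw [← hg H A, ← hg H' A', h]
    subst hH
    congr 1
    apply Subtype.ext
    obtain ⟨R, hR⟩ := hTR H
    have := congrArg (· * R) h
    simpa only [Matrix.mul_assoc, hR, Matrix.mul_one] using this
  · rintro ⟨S, hS⟩
    have hr := rank_gram S hS
    rw [Fintype.card_fin] at hr
    set H : {H : Matrix (Fin d) (Fin d) F // H.IsHermitian ∧ H.rank = r} :=
      ⟨Sᴴ * S, isHermitian_conjTranspose_mul_self S, hr⟩ with hH
    obtain ⟨R, hR⟩ := hTR H
    have hTS : (T H)ᴴ * T H = Sᴴ * S := hT H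
    refine ⟨⟨H, ⟨S * R, ?_⟩⟩, Subtype.ext ?_⟩
    · rw [mem_unitaryGroup_iff', star_eq_conjTranspose, conjTranspose_mul, Matrix.mul_assoc,
        ← Matrix.mul_assoc Sᴴ, ← hTS, Matrix.mul_assoc, hR, Matrix.mul_one, ← conjTranspose_mul, hR,
        conjTranspose_one]
    · obtain ⟨L, hL⟩ := hS
      have hL' : Lᴴ * Sᴴ = 1 := by rw [← conjTranspose_mul, hL, conjTranspose_one]
      show S * R * T H = S
      calc S * R * T H = (Lᴴ * Sᴴ) * (S * R * T H) := by rw [hL', Matrix.one_mul]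
        _ = Lᴴ * ((Sᴴ * S) * (R * T H)) := by simp only [Matrix.mul_assoc]
        _ = Lᴴ * ((T H)ᴴ * (T H * R) * T H) := by rw [← hTS]; simp only [Matrix.mul_assoc]
        _ = Lᴴ * (Sᴴ * S) := by rw [hR, Matrix.mul_one, hTS]
        _ = S := by rw [← Matrix.mul_assoc, hL', Matrix.one_mul]
end count

/-! ### Burnside's lemma for injective matrices -/

section burnside
variable {F : Type} [Field F] [StarRing F]

/-- The rank of the Gram matrix of `d` independent vectors in `F^n` is at least `2d - n`: its kernel
embeds in the orthogonal complement of their span, which has dimension `n - d`. -/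
theorem two_mul_le_of_gram {n d : ℕ} (T : Matrix (Fin n) (Fin d) F)
    (hT : ∃ L : Matrix (Fin d) (Fin n) F, L * T = 1) : 2 * d ≤ n + (Tᴴ * T).rank := by
  obtain ⟨L, hL⟩ := hT
  have hLT : Tᴴ * Lᴴ = 1 := by rw [← conjTranspose_mul, hL, conjTranspose_one]
  -- `T` embeds the kernel of `Tᴴ * T` in the kernel of `Tᴴ`
  have h1 := LinearMap.finrank_range_add_finrank_ker (Tᴴ * T).mulVecLin
  have h2 := LinearMap.finrank_range_add_finrank_ker Tᴴ.mulVecLin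
  have h3 : Module.finrank F (LinearMap.range Tᴴ.mulVecLin) = d := by
    have : LinearMap.range Tᴴ.mulVecLin = ⊤ := by
      rw [LinearMap.range_eq_top]
      intro y
      exact ⟨Lᴴ *ᵥ y, by rw [mulVecLin_apply, mulVec_mulVec, hLT, one_mulVec]⟩
    rw [this, finrank_top, Module.finrank_fin_fun]
  have h4 : Module.finrank F (LinearMap.ker (Tᴴ * T).mulVecLin) ≤
      Module.finrank F (LinearMap.ker Tᴴ.mulVecLin) := by
    refine LinearMap.finrank_le_finrank_of_injective (f := T.mulVecLin.restrict ?_) ?_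
    · intro x hx
      rw [LinearMap.mem_ker, mulVecLin_apply] at hx ⊢
      rw [mulVecLin_apply, mulVec_mulVec, hx]
    · intro x y h
      apply Subtype.ext
      have h : T *ᵥ x.1 = T *ᵥ y.1 := congrArg Subtype.val h
      have := congrArg (L *ᵥ ·) h
      simpa [hL] using this
  rw [Module.finrank_fin_fun] at h1 h2
  unfold Matrix.rank
  omega

/-- Converse of `two_mul_le_of_gram`. A factorisation `SᴴS = H` with `rank H` rows is made injective
by adding rows `P` and `θ • P`, where `P` is injective on `ker S`. As `θ` has norm `-1`, these rows
cancel in the Gram matrix. -/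
theorem exists_injective_gram (ht : ∃ z : F, z + star z ≠ 0)
    (hn : ∀ a : F, star a = a → ∃ z : F, star z * z = a) {n d : ℕ}
    (H : Matrix (Fin d) (Fin d) F) (hH : H.IsHermitian) (hr : 2 * d ≤ n + H.rank) :
    ∃ T : Matrix (Fin n) (Fin d) F, (∃ L : Matrix (Fin d) (Fin n) F, L * T = 1) ∧
      Tᴴ * T = H := by
  obtain ⟨S, hS⟩ := exists_gram_of_rank_le ht hn H.rank H hH le_rfl
  obtain ⟨θ, hθ⟩ := hn (-1) (by simp)
  have hSr : S.rank = H.rank := by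
    apply le_antisymm
    · simpa using rank_le_card_height S
    · conv_lhs => rw [← hS]
      exact rank_mul_le_right _ _
  have h1 := LinearMap.finrank_range_add_finrank_ker S.mulVecLin
  rw [Module.finrank_fin_fun] at h1
  set s := Module.finrank F (LinearMap.ker S.mulVecLin) with hs
  have hc : H.rank + s = d := by rw [← hSr]; exact h1
  obtain ⟨g, hg⟩ := (LinearMap.ker S.mulVecLin).subtype.exists_leftInverse_of_injective
    (Submodule.ker_subtype _)
  let e : LinearMap.ker S.mulVecLin ≃ₗ[F] (Fin s → F) :=
    LinearEquiv.ofFinrankEq _ _ (by rw [Module.finrank_fin_fun])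
  let P : Matrix (Fin s) (Fin d) F := LinearMap.toMatrix' (e.toLinearMap ∘ₗ g)
  let w : Fin n ≃ Fin H.rank ⊕ (Fin s ⊕ (Fin s ⊕ Fin (n - H.rank - 2 * s))) :=
    Fintype.equivOfCardEq (by simp; omega)
  refine ⟨(fromRows S (fromRows P (fromRows (θ • P) 0))).submatrix w id, ?_, ?_⟩
  · rw [exists_left_inv_iff]
    intro x hx
    have hx' : fromRows S (fromRows P (fromRows (θ • P)
        (0 : Matrix (Fin (n - H.rank - 2 * s)) (Fin d) F))) *ᵥ x = 0 := by
      funext i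
      have := congrFun hx (w.symm i)
      simpa [mulVec, submatrix] using this
    have hSx : S *ᵥ x = 0 := by
      funext i
      exact congrFun hx' (Sum.inl i)
    have hPx : P *ᵥ x = 0 := by
      funext i
      exact congrFun hx' (Sum.inr (Sum.inl i))
    have hx1 : e (g x) = 0 := by
      rw [← hPx]
      simp [P, LinearMap.toMatrix'_mulVec]
    have hgx : g x = 0 := by simpa using hx1
    have := LinearMap.congr_fun hg ⟨x, by simpa using hSx⟩
    rw [LinearMap.comp_apply, Submodule.subtype_apply, hgx] at this
    exact (congrArg Subtype.val this).symm
  · rw [conjTranspose_submatrix, submatrix_mul_equiv, submatrix_id_id,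
      conjTranspose_fromRows_eq_fromCols_conjTranspose,
      conjTranspose_fromRows_eq_fromCols_conjTranspose,
      conjTranspose_fromRows_eq_fromCols_conjTranspose, fromCols_mul_fromRows,
      fromCols_mul_fromRows, fromCols_mul_fromRows, hS, conjTranspose_smul,
      Matrix.smul_mul, Matrix.mul_smul, smul_smul, hθ]
    simp

variable [Fintype F]

/-- The injective `n × d` matrices fixed by `A` are the `d`-tuples of independent vectors in the
fixed space of `A`. -/
theorem card_fixed {n : ℕ} (d : ℕ) (A : Matrix (Fin n) (Fin n) F) :
    (Nat.card {T : Matrix (Fin n) (Fin d) F //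
        (∃ L : Matrix (Fin d) (Fin n) F, L * T = 1) ∧ A * T = T} : ℚ) =
      fall (Fintype.card F) ((Fintype.card F : ℚ) ^
        Module.finrank F (LinearMap.ker (mulVecLin (A - 1)))) d := by
  rw [← card_linearIndependent_eq_fall]
  congr 1
  have hli : ∀ T : Matrix (Fin n) (Fin d) F, (∃ L : Matrix (Fin d) (Fin n) F, L * T = 1) ↔
      LinearIndependent F (fun j => Tᵀ j) := by
    intro T
    rw [← exists_right_inv_iff]
    constructor
    · rintro ⟨R, hR⟩
      exact ⟨Rᵀ, by rw [← transpose_mul, hR, transpose_one]⟩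
    · rintro ⟨R, hR⟩
      exact ⟨Rᵀ, by rw [← transpose_inj, transpose_mul, transpose_transpose, hR, transpose_one]⟩
  have hker : ∀ T : Matrix (Fin n) (Fin d) F, A * T = T ↔
      ∀ j, Tᵀ j ∈ LinearMap.ker (mulVecLin (A - 1)) := by
    intro T
    simp only [LinearMap.mem_ker, mulVecLin_apply, sub_mulVec, one_mulVec, sub_eq_zero]
    constructor
    · intro h j
      funext i
      exact congrFun (congrFun h i) j
    · intro h
      ext i j
      exact congrFun (h j) i
  refine Nat.card_congr
    { toFun := fun T => ⟨fun j => ⟨T.1ᵀ j, (hker _).1 T.2.2 j⟩, ?_⟩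
      invFun := fun s => ⟨Matrix.of fun i j => (s.1 j).1 i, ?_, ?_⟩
      left_inv := fun T => rfl
      right_inv := fun s => rfl }
  · rw [← LinearMap.linearIndependent_iff _ (Submodule.ker_subtype _)]
    exact (hli _).1 T.2.1
  · rw [hli]
    exact (LinearMap.linearIndependent_iff _ (Submodule.ker_subtype _)).2 s.2
  · rw [hker]
    exact fun j => (s.1 j).2

/-- Burnside's lemma for the unitary group acting on injective `n × d` matrices. By `witt` the orbits
are classified by Gram matrices, and by `two_mul_le_of_gram` and `exists_injective_gram` the Gram
matrices that occur are the Hermitian `H` with `2d ≤ n + rank H`. -/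
theorem burnside (ht : ∀ a : F, star a = a → ∃ z : F, z + star z = a)
    (ht' : ∃ z : F, z + star z ≠ 0)
    (hn : ∀ a : F, star a = a → ∃ z : F, star z * z = a) (n d : ℕ)
    [Fintype (unitaryGroup (Fin n) F)] :
    ∑ A : unitaryGroup (Fin n) F, fall (Fintype.card F) ((Fintype.card F : ℚ) ^
        Module.finrank F (LinearMap.ker (mulVecLin (A.1 - 1)))) d =
      (Nat.card {H : Matrix (Fin d) (Fin d) F // H.IsHermitian ∧ 2 * d ≤ n + H.rank} : ℚ) *
        Fintype.card (unitaryGroup (Fin n) F) := by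
  classical
  let X := {T : Matrix (Fin n) (Fin d) F // ∃ L : Matrix (Fin d) (Fin n) F, L * T = 1}
  let _ : MulAction (unitaryGroup (Fin n) F) X :=
    { smul := fun A T => ⟨A.1 * T.1, by
        obtain ⟨L, hL⟩ := T.2
        refine ⟨L * star A.1, ?_⟩
        rw [Matrix.mul_assoc, ← Matrix.mul_assoc _ A.1, mem_unitaryGroup_iff'.1 A.2,
          Matrix.one_mul, hL]⟩
      one_smul := fun T => Subtype.ext (Matrix.one_mul T.1)
      mul_smul := fun A B T => Subtype.ext (Matrix.mul_assoc A.1 B.1 T.1) }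
  have hsmul : ∀ (A : unitaryGroup (Fin n) F) (T : X), (A • T).1 = A.1 * T.1 := fun _ _ => rfl
  have hfix : ∀ A : unitaryGroup (Fin n) F, (Fintype.card (MulAction.fixedBy X A) : ℚ) =
      fall (Fintype.card F) ((Fintype.card F : ℚ) ^
        Module.finrank F (LinearMap.ker (mulVecLin (A.1 - 1)))) d := by
    intro A
    rw [← card_fixed, ← Nat.card_eq_fintype_card]
    congr 1
    refine Nat.card_congr ((Equiv.subtypeEquivRight fun T => ?_).trans
      (Equiv.subtypeSubtypeEquivSubtypeInter (fun T : Matrix (Fin n) (Fin d) F =>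
        ∃ L : Matrix (Fin d) (Fin n) F, L * T = 1) (fun T => A.1 * T = T)))
    rw [MulAction.mem_fixedBy, Subtype.ext_iff, hsmul]
  have hdn : ∀ T : X, d ≤ n := by
    rintro ⟨T, L, hL⟩
    have h := (rank_mul_le_left L T).trans (rank_le_card_width _)
    rw [hL, rank_one] at h
    simpa using h
  have horb : Nat.card {H : Matrix (Fin d) (Fin d) F // H.IsHermitian ∧ 2 * d ≤ n + H.rank} =
      Nat.card (Quotient (MulAction.orbitRel (unitaryGroup (Fin n) F) X)) := by
    symm
    refine Nat.card_eq_of_bijective (Quotient.lift (fun T : X => ⟨T.1ᴴ * T.1,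
      isHermitian_conjTranspose_mul_self T.1, two_mul_le_of_gram T.1 T.2⟩) ?_) ⟨?_, ?_⟩
    · rintro T T' ⟨A, hA⟩
      apply Subtype.ext
      have hA : A.1 * T'.1 = T.1 := congrArg Subtype.val hA
      have hAA := mem_unitaryGroup_iff'.1 A.2
      rw [star_eq_conjTranspose] at hAA
      show T.1ᴴ * T.1 = T'.1ᴴ * T'.1
      rw [← hA, conjTranspose_mul, Matrix.mul_assoc, ← Matrix.mul_assoc _ _ T'.1, hAA,
        Matrix.one_mul]
    · rintro ⟨T⟩ ⟨T'⟩ h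
      have h : T.1ᴴ * T.1 = T'.1ᴴ * T'.1 := congrArg Subtype.val h
      have hd := hdn T
      obtain ⟨A, hA, hAT⟩ := witt ht ht' hn (m := Fin n) (n - d) (Fin d) (by simp; omega) T'.1 T.1
        T'.2 T.2 h.symm
      exact Quotient.sound ⟨⟨A, mem_unitaryGroup_iff.2 hA⟩, Subtype.ext hAT⟩
    · rintro ⟨H, hH, hr⟩
      obtain ⟨T, hT, hTH⟩ := exists_injective_gram ht' hn H hH hr
      exact ⟨Quotient.mk _ ⟨T, hT⟩, Subtype.ext hTH⟩
  have := MulAction.sum_card_fixedBy_eq_card_orbits_mul_card_group (unitaryGroup (Fin n) F) X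
  rw [horb, Nat.card_eq_fintype_card, ← Nat.cast_mul, ← this, Nat.cast_sum]
  exact Finset.sum_congr rfl fun A _ => (hfix A).symm
end burnside

/-! ### Signs and orders at `p = -q` -/

theorem uOrderQ_succ (q m : ℕ) :
    uOrderQ q (m + 1) = uOrderQ q m * (q : ℚ) ^ m * ((q : ℚ) ^ (m + 1) - (-1) ^ (m + 1)) := by
  unfold uOrderQ
  rw [Finset.prod_range_succ, Nat.triangle_succ, pow_add]
  ring

theorem uOrderQ_eq_fall (q m : ℕ) :
    uOrderQ q m = (-1) ^ m * fall (-(q : ℚ)) ((-(q : ℚ)) ^ m) m := by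
  induction m with
  | zero => simp [uOrderQ, fall]
  | succ m ih =>
    rw [uOrderQ_succ, ih, fall_pow_succ, neg_pow (q : ℚ) (m + 1), neg_pow (q : ℚ) m]
    have h : ((-1 : ℚ) ^ m) * (-1) ^ m = 1 := by rw [← mul_pow]; simp
    generalize fall (-(q : ℚ)) _ m = G
    simp only [pow_succ]
    linear_combination -(-1 : ℚ) ^ m * G * q ^ m * (q ^ m * q) * h

/-- The denominators in the Lagrange inversion, in terms of the orders `|U(i,q)|`. -/
theorem prod_pow_sub_pow (q k i : ℕ) :
    (∏ l ∈ Finset.range i, ((-(q : ℚ)) ^ k - (-(q : ℚ)) ^ (k + 1 + l))) *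
      (-(q : ℚ)) ^ (i * (i - 1) / 2) = (-(q : ℚ)) ^ (k * i) * uOrderQ q i := by
  induction i with
  | zero => simp [uOrderQ]
  | succ i ih =>
    have h : ((-1 : ℚ) ^ i) * (-1) ^ i = 1 := by rw [← mul_pow]; simp
    rw [Finset.prod_range_succ, Nat.triangle_succ, uOrderQ_succ, mul_add, mul_one, pow_add _ _ i,
      pow_add _ (k * i)]
    have e : ((-(q : ℚ)) ^ k - (-(q : ℚ)) ^ (k + 1 + i)) * (-(q : ℚ)) ^ i =
        (-(q : ℚ)) ^ k * ((q : ℚ) ^ i * ((q : ℚ) ^ (i + 1) - (-1) ^ (i + 1))) := by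
      rw [pow_add, pow_add, neg_pow (q : ℚ) i]
      simp only [pow_succ]
      generalize (-(q : ℚ)) ^ k = K
      linear_combination K * (q : ℚ) ^ i * q ^ i * q * h
    linear_combination (-(q : ℚ)) ^ k * ((q : ℚ) ^ i * ((q : ℚ) ^ (i + 1) - (-1) ^ (i + 1))) * ih
      + (∏ l ∈ Finset.range i, ((-(q : ℚ)) ^ k - (-(q : ℚ)) ^ (k + 1 + l))) *
      (-(q : ℚ)) ^ (i * (i - 1) / 2) * e

/-! ### Moments of the dimension of the fixed space -/

theorem card_eq_sum_ite {α : Type} [Finite α] (P : α → Prop) (f : α → ℕ) (d n : ℕ)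
    (hf : ∀ x, f x ≤ d) : Nat.card {x // P x ∧ 2 * d ≤ n + f x} =
      ∑ r ∈ Finset.range (d + 1), if 2 * d ≤ n + r then Nat.card {x // P x ∧ f x = r} else 0 := by
  classical
  have := Fintype.ofFinite α
  rw [Nat.card_eq_fintype_card, Fintype.card_subtype,
    Finset.card_eq_sum_card_fiberwise (f := f) (t := Finset.range (d + 1))
      (fun x _ => Finset.mem_coe.2 (Finset.mem_range.2 (Nat.lt_succ_of_le (hf x))))]
  refine Finset.sum_congr rfl fun r _ => ?_
  rw [Finset.filter_filter]
  split_ifs with h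
  · rw [Nat.card_eq_fintype_card, Fintype.card_subtype]
    congr 1
    ext x
    simp only [Finset.mem_filter, Finset.mem_univ, true_and]
    constructor
    · rintro ⟨⟨h1, _⟩, h2⟩; exact ⟨h1, h2⟩
    · rintro ⟨h1, rfl⟩; exact ⟨⟨h1, h⟩, rfl⟩
  · rw [Finset.card_eq_zero, Finset.filter_eq_empty_iff]
    rintro x _ ⟨⟨_, h1⟩, rfl⟩
    exact h h1

/-- Inverting the triangular system formed by the Burnside sums. By `fall_sq_eq` they are
`∑ r, c(d,r) E(2d - r)` with `E(j)` the sum of `fall p (p ^ f) j`, and `E(j) = 0` for `j > n`. Since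
`c(d,d) ≠ 0`, this determines `E(d)` by descending induction on `d`. -/
theorem moments_of_burnside {G : Type} [Fintype G] {p : ℚ} (h0 : p ≠ 0)
    (h1 : ∀ j, p ^ (j + 1) ≠ 1) (f : G → ℕ) (n : ℕ) (hf : ∀ A, f A ≤ n) (N : ℚ)
    (hB : ∀ d, ∑ A, fall (p ^ 2) ((p ^ 2) ^ f A) d =
      (∑ r ∈ Finset.range (d + 1), if 2 * d ≤ n + r then (-1) ^ r * newtonCoeff p d r else 0) * N)
    (j : ℕ) (hj : j ≤ n) : ∑ A, fall p (p ^ f A) j = (-1) ^ j * N := by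
  set e : ℕ → ℚ := fun j => ∑ A, fall p (p ^ f A) j - if j ≤ n then (-1) ^ j * N else 0 with he
  have hsum : ∀ d, ∑ r ∈ Finset.range (d + 1), newtonCoeff p d r * e (2 * d - r) = 0 := by
    intro d
    have h := hB d
    have hl : ∀ A, fall (p ^ 2) ((p ^ 2) ^ f A) d =
        ∑ r ∈ Finset.range (d + 1), newtonCoeff p d r * fall p (p ^ f A) (2 * d - r) := by
      intro A
      rw [← fall_sq_eq h0 h1, ← pow_mul, ← pow_mul, mul_comm]
    rw [Finset.sum_congr rfl fun A _ => hl A, Finset.sum_comm, Finset.sum_mul] at h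
    rw [← sub_eq_zero, ← Finset.sum_sub_distrib] at h
    rw [← h]
    refine Finset.sum_congr rfl fun r hr => ?_
    have hr' := Finset.mem_range.1 hr
    have hs : (-1 : ℚ) ^ (2 * d - r) = (-1) ^ r := by
      have : (-1 : ℚ) ^ (2 * d - r) * (-1) ^ r = 1 := by
        rw [← pow_add, Nat.sub_add_cancel (by omega), pow_mul]; simp
      have h2 : (-1 : ℚ) ^ r * (-1) ^ r = 1 := by rw [← mul_pow]; simp
      linear_combination (-1) ^ r * this - (-1) ^ (2 * d - r) * h2
    simp only [he, ← Finset.mul_sum, hs]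
    by_cases hc : 2 * d ≤ n + r
    · rw [if_pos hc, if_pos (by omega)]; ring
    · rw [if_neg hc, if_neg (by omega)]; ring
  have key : ∀ m j, n < j + m → e j = 0 := by
    intro m
    induction m with
    | zero =>
      intro j hj
      simp only [he]
      rw [if_neg (by omega), sub_zero]
      exact Finset.sum_eq_zero fun A _ => fall_pow_eq_zero p ((hf A).trans_lt hj)
    | succ m ih =>
      intro j hj
      have h := hsum j
      rw [Finset.sum_range_succ, Finset.sum_eq_zero, zero_add, show 2 * j - j = j by omega] at h
      · refine (mul_eq_zero.1 h).resolve_left (div_ne_zero ?_ (fall_self_ne_zero h0 h1 _))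
        refine fall_self_ne_zero (pow_ne_zero _ h0) (fun i hi => h1 (2 * i + 1) ?_) j
        rw [← hi, ← pow_mul]; ring
      · intro r hr
        have := Finset.mem_range.1 hr
        rw [ih _ (by omega), mul_zero]
  have h := key (n + 1) j (by omega)
  simp only [he] at h
  rw [if_pos hj] at h
  linarith

theorem neg_pow_ne_one {q : ℕ} (hq : 2 ≤ q) (j : ℕ) : (-(q : ℚ)) ^ (j + 1) ≠ 1 := by
  intro h
  have h1 := congrArg abs h
  rw [abs_pow, abs_neg, abs_one, Nat.abs_cast] at h1
  have h2 : (2 : ℚ) ≤ q := by exact_mod_cast hq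
  have h3 : (1 : ℚ) < (q : ℚ) ^ (j + 1) := one_lt_pow₀ (by linarith) (by omega)
  linarith

theorem neg_pow_injective {q : ℕ} (hq : 2 ≤ q) :
    Function.Injective fun l : ℕ => (-(q : ℚ)) ^ l := by
  intro a b h
  have h1 := congrArg abs h
  simp only [abs_pow, abs_neg, Nat.abs_cast] at h1
  exact Nat.pow_right_injective hq (by exact_mod_cast h1)

section
variable {F : Type} [Field F] [Fintype F] [StarRing F] {q : ℕ}

/-- The order of the unitary group, together with the number of Hermitian matrices of each rank. By
`card_hermitian_rank` one determines the other, and the order follows by induction on `d` because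
the numbers of Hermitian matrices of rank `0, …, d` add up to `q^(d²)`. -/
theorem card_unitary_and_hermitian_rank (hs : ∀ x : F, star x = x ^ q)
    (hF : Fintype.card F = q ^ 2) (hq : 2 ≤ q) (d : ℕ) :
    (Nat.card (unitaryGroup (Fin d) F) : ℚ) = uOrderQ q d ∧
    ∀ r ≤ d, (Nat.card {H : Matrix (Fin d) (Fin d) F // H.IsHermitian ∧ H.rank = r} : ℚ) =
      (-1) ^ r * newtonCoeff (-(q : ℚ)) d r := by
  have h0 : -(q : ℚ) ≠ 0 := by
    rw [neg_ne_zero, Nat.cast_ne_zero]; omega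
  have h1 := neg_pow_ne_one hq
  have hsgn : ∀ r : ℕ, ((-1 : ℚ) ^ r) * (-1) ^ r = 1 := fun r => by rw [← mul_pow]; simp
  have hcount : ∀ d r,
      (Nat.card {H : Matrix (Fin d) (Fin d) F // H.IsHermitian ∧ H.rank = r} : ℚ) *
        Nat.card (unitaryGroup (Fin r) F) = fall ((-(q : ℚ)) ^ 2) (((-(q : ℚ)) ^ 2) ^ d) r := by
    intro d r
    rw [← Nat.cast_mul, card_hermitian_rank (exists_trace_ne hs hF hq)
      (fun a ha => exists_star_mul_self_eq hs hF hq ha), card_right_inv, hF]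
    push_cast
    rw [neg_sq]
  have hne : ∀ r, fall (-(q : ℚ)) ((-(q : ℚ)) ^ r) r ≠ 0 := fall_self_ne_zero h0 h1
  have hne2 : ∀ r, fall ((-(q : ℚ)) ^ 2) (((-(q : ℚ)) ^ 2) ^ r) r ≠ 0 :=
    fall_self_ne_zero (pow_ne_zero _ h0) fun i hi => h1 (2 * i + 1) (by rw [← hi, ← pow_mul]; ring)
  have hherm : ∀ d r, (Nat.card (unitaryGroup (Fin r) F) : ℚ) = uOrderQ q r →
      (Nat.card {H : Matrix (Fin d) (Fin d) F // H.IsHermitian ∧ H.rank = r} : ℚ) =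
        (-1) ^ r * newtonCoeff (-(q : ℚ)) d r := by
    intro d r h
    have := hcount d r
    rw [h, uOrderQ_eq_fall] at this
    rw [newtonCoeff, mul_div_assoc', eq_div_iff (hne r), ← this]
    linear_combination (-(Nat.card {H : Matrix (Fin d) (Fin d) F // H.IsHermitian ∧ H.rank = r}
      : ℚ) * fall (-(q : ℚ)) ((-(q : ℚ)) ^ r) r) * hsgn r
  suffices hU : ∀ d, (Nat.card (unitaryGroup (Fin d) F) : ℚ) = uOrderQ q d from
    ⟨hU d, fun r _ => hherm d r (hU r)⟩
  clear d
  intro d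
  induction d using Nat.strong_induction_on with
  | _ d ih =>
    -- summing over the rank counts all Hermitian matrices, which determines the term of rank `d`
    have htot := card_eq_sum_ite (fun H : Matrix (Fin d) (Fin d) F => H.IsHermitian)
      Matrix.rank d (2 * d) (fun H => by simpa using rank_le_card_width H)
    have htot' : Nat.card {H : Matrix (Fin d) (Fin d) F // H.IsHermitian ∧ 2 * d ≤ 2 * d + H.rank}
        = q ^ (d ^ 2) := by
      rw [← card_hermitian hs hF hq d]
      exact Nat.card_congr (Equiv.subtypeEquivRight fun H => by simp)
    rw [htot'] at htot
    simp only [le_add_iff_nonneg_right, zero_le, if_true] at htot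
    have htotQ := congrArg (Nat.cast : ℕ → ℚ) htot
    have halt := alternating_newtonCoeff h0 h1 d
    have hq' : (-1 : ℚ) ^ d * (-(q : ℚ)) ^ (d ^ 2) = (q : ℚ) ^ (d ^ 2) := by
      have hpar : Even (d + d ^ 2) := by
        rw [show d + d ^ 2 = d * (d + 1) by ring]; exact Nat.even_mul_succ_self d
      rw [neg_pow (q : ℚ) (d ^ 2), ← mul_assoc, ← pow_add, hpar.neg_one_pow, one_mul]
    rw [hq'] at halt
    push_cast at htotQ
    rw [← halt, Finset.sum_range_succ, Finset.sum_range_succ,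
      Finset.sum_congr rfl fun r hr => (hherm d r (ih r (Finset.mem_range.1 hr))).symm,
      add_left_cancel_iff] at htotQ
    have hc := hcount d d
    have h3 := hne d
    rw [← htotQ, newtonCoeff, mul_div_assoc', div_mul_eq_mul_div, div_eq_iff h3] at hc
    rw [uOrderQ_eq_fall]
    have hN : (-1 : ℚ) ^ d * Nat.card (unitaryGroup (Fin d) F) = fall (-(q : ℚ)) ((-(q : ℚ)) ^ d) d :=
      mul_left_cancel₀ (hne2 d) (by linear_combination hc)
    linear_combination (-1 : ℚ) ^ d * hN - (Nat.card (unitaryGroup (Fin d) F) : ℚ) * hsgn d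

/-- The sum of `∏_{i<j} ((-q)^{f(A)} - (-q)^i)` over the unitary group, where `f(A)` is the dimension
of the fixed space. -/
theorem moments (hs : ∀ x : F, star x = x ^ q) (hF : Fintype.card F = q ^ 2) (hq : 2 ≤ q)
    (n : ℕ) [Fintype (unitaryGroup (Fin n) F)] (j : ℕ) (hj : j ≤ n) :
    ∑ A : unitaryGroup (Fin n) F, fall (-(q : ℚ)) ((-(q : ℚ)) ^
        Module.finrank F (LinearMap.ker (mulVecLin (A.1 - 1)))) j =
      (-1) ^ j * Fintype.card (unitaryGroup (Fin n) F) := by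
  have h0 : -(q : ℚ) ≠ 0 := by
    rw [neg_ne_zero, Nat.cast_ne_zero]; omega
  refine moments_of_burnside h0 (neg_pow_ne_one hq)
    (fun A : unitaryGroup (Fin n) F => Module.finrank F (LinearMap.ker (mulVecLin (A.1 - 1))))
    n (fun A => ?_) _ (fun d => ?_) j hj
  · exact (Submodule.finrank_le _).trans_eq (Module.finrank_fin_fun F)
  · have hb := burnside (fun a ha => exists_trace_eq hs hF hq ha) (exists_trace_ne hs hF hq)
      (fun a ha => exists_star_mul_self_eq hs hF hq ha) n d
    rw [hF, Nat.cast_pow, ← neg_sq (q : ℚ)] at hb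
    rw [hb, card_eq_sum_ite (fun H : Matrix (Fin d) (Fin d) F => H.IsHermitian)
      Matrix.rank d n (fun H => by simpa using rank_le_card_width H), Nat.cast_sum]
    congr 1
    refine Finset.sum_congr rfl fun r hr => ?_
    rw [Nat.cast_ite, Nat.cast_zero,
      (card_unitary_and_hermitian_rank hs hF hq d).2 r (Nat.lt_succ_iff.1 (Finset.mem_range.1 hr))]

end

/-- On `0, …, n`, the indicator of `f = k` is a combination of the `fall p (p ^ f) (k + i)`. -/
theorem indicator_eq_sum_fall {q : ℕ} (hq : 2 ≤ q) {n k f : ℕ} (hk : k ≤ n) (hf : f ≤ n) :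
    ∑ i ∈ Finset.range (n - k + 1), fall (-(q : ℚ)) ((-(q : ℚ)) ^ f) (k + i) /
      (fall (-(q : ℚ)) ((-(q : ℚ)) ^ k) k *
        ∏ l ∈ Finset.range i, ((-(q : ℚ)) ^ k - (-(q : ℚ)) ^ (k + 1 + l))) =
      if f = k then 1 else 0 := by
  have hx := neg_pow_injective hq
  have h := lagrange_newton (fun l => (-(q : ℚ)) ^ l) hx ((-(q : ℚ)) ^ f) k (n - k)
  refine h.trans ?_
  split_ifs with hfk
  · subst hfk
    apply div_self
    refine mul_ne_zero ?_ ?_ <;>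
    · refine Finset.prod_ne_zero_iff.2 fun l hl => sub_ne_zero.2 fun h => ?_
      have := hx h
      have := Finset.mem_range.1 hl
      omega
  · rw [div_eq_zero_iff, mul_eq_zero]
    left
    rcases lt_or_gt_of_ne hfk with h | h
    · exact Or.inl (Finset.prod_eq_zero (Finset.mem_range.2 h) (sub_self _))
    · refine Or.inr (Finset.prod_eq_zero (i := f - (k + 1)) (Finset.mem_range.2 (by omega)) ?_)
      rw [show k + 1 + (f - (k + 1)) = f by omega, sub_self]

section
variable {F : Type} [Field F] [Fintype F] [StarRing F] {q : ℕ}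

/-- The formula for a field whose `star` is `x ↦ x^q`: the indicator of `f(A) = k` is expanded by
`indicator_eq_sum_fall` and summed by `moments`. -/
theorem proportion_of_star (hs : ∀ x : F, star x = x ^ q) (hF : Fintype.card F = q ^ 2)
    (hq : 2 ≤ q) (n k : ℕ) (hk : k ≤ n) :
    (Nat.card {A : Matrix (Fin n) (Fin n) F // A * Aᴴ = 1 ∧
        Module.finrank F (LinearMap.ker (mulVecLin (A - 1))) = k} : ℚ) /
      (Nat.card {A : Matrix (Fin n) (Fin n) F // A * Aᴴ = 1} : ℚ)
    = (1 / uOrderQ q k) * ∑ i ∈ Finset.range (n - k + 1),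
        (-1 : ℚ) ^ i * (-(q : ℚ)) ^ (i * (i - 1) / 2) / ((-(q : ℚ)) ^ (k * i) * uOrderQ q i) := by
  classical
  have := Fintype.ofFinite (unitaryGroup (Fin n) F)
  have h0 : -(q : ℚ) ≠ 0 := by
    rw [neg_ne_zero, Nat.cast_ne_zero]; omega
  have hden : Nat.card {A : Matrix (Fin n) (Fin n) F // A * Aᴴ = 1} =
      Fintype.card (unitaryGroup (Fin n) F) := by
    rw [← Nat.card_eq_fintype_card]
    exact Nat.card_congr (Equiv.subtypeEquivRight fun A => mem_unitaryGroup_iff.symm)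
  have hnum : (Nat.card {A : Matrix (Fin n) (Fin n) F // A * Aᴴ = 1 ∧
        Module.finrank F (LinearMap.ker (mulVecLin (A - 1))) = k} : ℚ) =
      ∑ A : unitaryGroup (Fin n) F,
        if Module.finrank F (LinearMap.ker (mulVecLin (A.1 - 1))) = k then (1 : ℚ) else 0 := by
    rw [Finset.sum_boole, ← Fintype.card_subtype, ← Nat.card_eq_fintype_card]
    congr 1
    exact Nat.card_congr ((Equiv.subtypeSubtypeEquivSubtypeInter
      (fun A : Matrix (Fin n) (Fin n) F => A ∈ unitaryGroup (Fin n) F)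
      (fun A => Module.finrank F (LinearMap.ker (mulVecLin (A - 1))) = k)).trans
      (Equiv.subtypeEquivRight fun A => and_congr_left' mem_unitaryGroup_iff)).symm
  have hN : (Fintype.card (unitaryGroup (Fin n) F) : ℚ) ≠ 0 :=
    Nat.cast_ne_zero.2 Fintype.card_ne_zero
  have hfn : ∀ A : unitaryGroup (Fin n) F,
      Module.finrank F (LinearMap.ker (mulVecLin (A.1 - 1))) ≤ n := fun A => by
    exact (Submodule.finrank_le _).trans_eq (Module.finrank_fin_fun F)
  rw [hnum, hden, div_eq_iff hN,
    Finset.sum_congr rfl fun A _ => (indicator_eq_sum_fall hq hk (hfn A)).symm,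
    Finset.sum_comm, mul_assoc, Finset.sum_mul, Finset.mul_sum]
  refine Finset.sum_congr rfl fun i hi => ?_
  have hi' := Finset.mem_range.1 hi
  rw [← Finset.sum_div, moments hs hF hq n (k + i) (by omega), uOrderQ_eq_fall q k, pow_add,
    ← prod_pow_sub_pow]
  have hk0 := fall_self_ne_zero h0 (neg_pow_ne_one hq) k
  have hP : (∏ l ∈ Finset.range i, ((-(q : ℚ)) ^ k - (-(q : ℚ)) ^ (k + 1 + l))) ≠ 0 := by
    refine Finset.prod_ne_zero_iff.2 fun l _ => sub_ne_zero.2 fun h => ?_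
    have := neg_pow_injective hq h
    omega
  have hp := pow_ne_zero (i * (i - 1) / 2) h0
  have hsk : ((-1 : ℚ) ^ k) * (-1) ^ k = 1 := by rw [← mul_pow]; simp
  have hsX : ∀ X : ℚ, X ≠ 0 → 1 / ((-1) ^ k * X) = (-1) ^ k / X := fun X hX => by
    rw [div_eq_div_iff (mul_ne_zero (pow_ne_zero _ (by norm_num)) hX) hX]
    linear_combination -X * hsk
  rw [hsX _ hk0]
  field_simp
end

/-- Rudvalis–Shinoda: the proportion of `A ∈ U(n,q)` whose fixed space has dimension `k` is
`(1/|U(k,q)|) Σ_{i=0}^{n-k} (-1)^i (-q)^(i choose 2) / ((-q)^{ki} |U(i,q)|)`. -/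
theorem statement11 (q : ℕ) (hq : IsPrimePow q) (n k : ℕ) (hk : k ≤ n)
    (F : Type) [Field F] [Fintype F] (hF : Fintype.card F = q ^ 2) :
    (Nat.card {A : Matrix (Fin n) (Fin n) F //
        A * (A.map (fun x => x ^ q))ᵀ = 1 ∧
        Module.finrank F (LinearMap.ker (Matrix.mulVecLin (A - 1))) = k} : ℚ) /
      (Nat.card {A : Matrix (Fin n) (Fin n) F // A * (A.map (fun x => x ^ q))ᵀ = 1} : ℚ)
    = (1 / uOrderQ q k) *
        ∑ i ∈ Finset.range (n - k + 1),
          (-1 : ℚ) ^ i * (-(q : ℚ)) ^ (i * (i - 1) / 2) /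
            ((-(q : ℚ)) ^ (k * i) * uOrderQ q i) := by
  -- `q` is a power of the characteristic, so `x ↦ x^q` is an involutive automorphism of `F`
  obtain ⟨p, e, hp, he, rfl⟩ := (isPrimePow_nat_iff q).1 hq
  have : Fact p.Prime := ⟨hp⟩
  have : CharP F p := by
    obtain ⟨p', hp'⟩ := CharP.exists F
    obtain ⟨m, hp'p, hm⟩ := FiniteField.card F p'
    rw [hF, ← pow_mul] at hm
    have : p = p' := by
      have h1 : p ∣ p' ^ (m : ℕ) := hm ▸ dvd_pow_self p (by positivity)
      exact (Nat.prime_dvd_prime_iff_eq hp hp'p).1 (hp.dvd_of_dvd_pow h1)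
    exact this ▸ hp'
  let _ : StarRing F :=
    { star := fun x => x ^ p ^ e
      star_involutive := fun x => by
        show (x ^ p ^ e) ^ p ^ e = x
        rw [← pow_mul, ← sq, ← hF, FiniteField.pow_card]
      star_mul := fun x y => by
        show (x * y) ^ p ^ e = y ^ p ^ e * x ^ p ^ e
        rw [mul_pow, mul_comm]
      star_add := fun x y => add_pow_char_pow x y p e }
  exact proportion_of_star (fun _ => rfl) hF hq.two_le n k hk
end

section
/- Fix a prime power q and an integer k ≥ 0. As n → ∞, the proportion P_{U,n}(k,q) of elements of U(n,q) whose fixed space has dimension k converges to [∏_{r=1}^∞ (1 + (−q)^{−r})] · q^{−k²} / [∏_{j=1}^k (1 − q^{−2j})]. -/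
/-!
The proof is the method of moments. Write `Q = q ^ 2`, and let `d(A)` be the dimension of the fixed
space of `A`. By Burnside's lemma, the average over `A ∈ U(n,q)` of the number
`∏_{l < j} (Q ^ d(A) - Q ^ l)` of linearly independent `j`-tuples fixed by `A` is the number
`M n j` of orbits of `U(n,q)` on linearly independent `j`-tuples (`burnside`). By Witt's theorem
(`witt`) an orbit is determined by its Gram matrix, so `M n j` is at most the number `q ^ (j ^ 2)`
of Hermitian `j × j` matrices (`card_herm`), and for `n ≥ 2 j` every Hermitian matrix is a Gram
matrix (`exists_gram`), so equality holds.

A `q`-binomial inversion (`inversion`) recovers the proportion of `A` with `d(A) = k` as the sum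
`∑ i, invCoeff Q k i * M n (k + i)` (`card_fixed_dim`). The terms are dominated, uniformly in `n`,
by those of the absolutely convergent series `∑ i, invCoeff Q k i * q ^ ((k + i) ^ 2)`, so one may
pass to the limit termwise (`tendsto_of_moments`). With `x = -1 / q`, the limit is a constant
multiple of `∑ i, x ^ i / ∏_{l = 1}^i (1 - x ^ (2 l))`, which equals `∏_{r ≥ 1} (1 + x ^ r)` by an
identity of Euler (`euler_identity`).
-/

open Matrix

namespace RudvalisShinoda

/-! ### Traces and norms in a quadratic extension of finite fields -/

theorem exists_nonroot {F : Type} [Field F] [Fintype F] {q : ℕ} (hq : 1 < q)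
    (hF : Fintype.card F = q ^ 2) (c : F) : ∃ x : F, x ^ q + c * x ≠ 0 := by
  by_contra! h
  have hdeg : (Polynomial.X ^ q + Polynomial.C c * Polynomial.X : Polynomial F).natDegree = q := by
    rw [Polynomial.natDegree_add_eq_left_of_degree_lt, Polynomial.natDegree_X_pow]
    rw [Polynomial.degree_X_pow]
    exact lt_of_le_of_lt (Polynomial.degree_C_mul_X_le c) (by exact_mod_cast hq)
  have h0 : (Polynomial.X ^ q + Polynomial.C c * Polynomial.X : Polynomial F) = 0 := by
    apply Polynomial.eq_zero_of_natDegree_lt_card_of_eval_eq_zero _ Function.injective_id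
    · intro x; simpa using h x
    · rw [hdeg, hF]; nlinarith
  rw [h0] at hdeg
  simp at hdeg
  omega

theorem exists_trace_one {F : Type} [Field F] [Fintype F] [StarRing F] {q : ℕ} (hq : 1 < q)
    (hF : Fintype.card F = q ^ 2) (hs : ∀ x : F, star x = x ^ q) : ∃ t : F, t + star t = 1 := by
  obtain ⟨x, hx⟩ := exists_nonroot hq hF (1 : F)
  have hx' : x + star x ≠ 0 := by rw [hs]; rwa [one_mul, add_comm] at hx
  refine ⟨x / (x + star x), ?_⟩
  have : star (x / (x + star x)) = star x / (x + star x) := by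
    rw [star_div₀, star_add, star_star, add_comm (star x)]
  rw [this, ← add_div, div_self hx']

theorem exists_skew {F : Type} [Field F] [Fintype F] [StarRing F] {q : ℕ} (hq : 1 < q)
    (hF : Fintype.card F = q ^ 2) (hs : ∀ x : F, star x = x ^ q) :
    ∃ s : F, s ≠ 0 ∧ star s = -s := by
  obtain ⟨x, hx⟩ := exists_nonroot hq hF (-1 : F)
  refine ⟨star x - x, ?_, by simp⟩
  rw [hs]; intro h; apply hx; rw [← h]; ring

/-- Surjectivity of the norm: `d` is a power `g ^ m` of a generator of the cyclic group `Fˣ`, and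
`d ^ (q - 1) = 1` forces `q + 1 ∣ m`. -/
theorem exists_norm_eq {F : Type} [Field F] [Fintype F] [StarRing F] {q : ℕ} (hq : 1 < q)
    (hF : Fintype.card F = q ^ 2) (hs : ∀ x : F, star x = x ^ q) (d : F) (hd : star d = d)
    (hd0 : d ≠ 0) : ∃ a : F, star a * a = d := by
  classical
  obtain ⟨g, hg⟩ := IsCyclic.exists_generator (α := Fˣ)
  obtain ⟨m, hm⟩ := (mem_powers_iff_mem_zpowers.mpr (hg (Units.mk0 d hd0)))
  have hm : g ^ m = Units.mk0 d hd0 := hm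
  have hord : orderOf g = q ^ 2 - 1 := by
    rw [orderOf_eq_card_of_forall_mem_zpowers hg, Nat.card_eq_fintype_card,
      Fintype.card_units, hF]
  have h1 : g ^ (m * (q - 1)) = 1 := by
    rw [pow_mul, hm]
    apply Units.ext
    have : d ^ (q - 1) * d = 1 * d := by
      rw [← pow_succ, Nat.sub_add_cancel hq.le, ← hs, hd, one_mul]
    simpa using mul_right_cancel₀ hd0 this
  have h2 : (q + 1) * (q - 1) ∣ m * (q - 1) := by
    have h3 := orderOf_dvd_of_pow_eq_one h1
    rw [hord] at h3
    rwa [← Nat.sq_sub_sq, one_pow]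
  obtain ⟨c, hc⟩ := Nat.dvd_of_mul_dvd_mul_right (by omega) h2
  refine ⟨((g ^ c : Fˣ) : F), ?_⟩
  rw [hs, ← pow_succ, ← Units.val_pow_eq_pow_val, ← pow_mul, mul_comm, ← hc, hm]
  rfl

/-- With `t` of trace one and `s` nonzero skew, `(H, K) ↦ t • H + s • K` identifies pairs of
Hermitian matrices with all matrices, so there are `√(q ^ (2 j ^ 2))` Hermitian matrices. -/
theorem card_herm {F : Type} [Field F] [Fintype F] [StarRing F] {q : ℕ} (hq : 1 < q)
    (hF : Fintype.card F = q ^ 2) (hs : ∀ x : F, star x = x ^ q) (j : ℕ) :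
    Nat.card {H : Matrix (Fin j) (Fin j) F // Hᴴ = H} = q ^ (j ^ 2) := by
  obtain ⟨t, ht⟩ := exists_trace_one hq hF hs
  obtain ⟨s, hs0, hss⟩ := exists_skew hq hF hs
  let Herm := {H : Matrix (Fin j) (Fin j) F // Hᴴ = H}
  let φ : Herm × Herm → Matrix (Fin j) (Fin j) F := fun p => t • p.1.1 + s • p.2.1
  have htr : ∀ p, φ p + (φ p)ᴴ = p.1.1 := by
    rintro ⟨⟨H, hH⟩, ⟨K, hK⟩⟩
    simp only [φ, conjTranspose_add, conjTranspose_smul, hH, hK, hss]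
    have : H = (t + star t) • H := by rw [ht, one_smul]
    nth_rw 3 [this]
    rw [add_smul, neg_smul]; abel
  have hb : Function.Bijective φ := by
    constructor
    · intro p p' h
      have h1 : p.1 = p'.1 := Subtype.ext (by rw [← htr, ← htr, h])
      refine Prod.ext h1 (Subtype.ext ?_)
      simp only [φ, h1] at h
      exact smul_right_injective _ hs0 (add_left_cancel h)
    · intro C
      have hH : (C + Cᴴ)ᴴ = C + Cᴴ := by simp [add_comm]
      have hC : (C - t • (C + Cᴴ))ᴴ = -(C - t • (C + Cᴴ)) := by
        rw [conjTranspose_sub, conjTranspose_smul, hH]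
        have : star t = 1 - t := by rw [← ht]; ring
        rw [this, sub_smul, one_smul]; abel
      refine ⟨(⟨C + Cᴴ, hH⟩, ⟨s⁻¹ • (C - t • (C + Cᴴ)), ?_⟩), ?_⟩
      · rw [conjTranspose_smul, hC, star_inv₀, hss, inv_neg, neg_smul, smul_neg, neg_neg]
      · simp only [φ]
        rw [smul_smul, mul_inv_cancel₀ hs0, one_smul]; abel
  have hc := Nat.card_congr (Equiv.ofBijective φ hb)
  rw [Nat.card_prod, Nat.card_eq_fintype_card (α := Matrix _ _ _)] at hc
  have : Fintype.card (Matrix (Fin j) (Fin j) F) = (q ^ (j ^ 2)) ^ 2 := by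
    rw [show Fintype.card (Matrix (Fin j) (Fin j) F) = Fintype.card (Fin j → Fin j → F) from rfl]
    simp [hF, ← pow_mul]; ring
  rw [this, ← sq] at hc
  exact Nat.pow_left_injective (by norm_num : 2 ≠ 0) hc

/-! ### Euler's identity and passage to the limit -/

section Analysis

open Filter Topology

theorem euler_summable {x : ℝ} (hx0 : x ≠ 0) (hx : |x| < 1) :
    Summable fun i : ℕ => x ^ i / ∏ l ∈ Finset.range i, (1 - (x ^ 2) ^ (l + 1)) := by
  have hy : ∀ l : ℕ, 0 < 1 - (x ^ 2) ^ (l + 1) := fun l => by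
    have : (x ^ 2) ^ (l + 1) < 1 := pow_lt_one₀ (sq_nonneg x) ((sq_lt_one_iff_abs_lt_one x).mpr hx)
      (Nat.succ_ne_zero l)
    linarith
  have hD : ∀ i, 0 < ∏ l ∈ Finset.range i, (1 - (x ^ 2) ^ (l + 1)) := fun i =>
    Finset.prod_pos fun l _ => hy l
  refine summable_of_ratio_test_tendsto_lt_one hx
    (Eventually.of_forall fun i => div_ne_zero (pow_ne_zero _ hx0) (hD i).ne') ?_
  have h1 : Tendsto (fun i : ℕ => |x| / (1 - (x ^ 2) ^ (i + 1))) atTop (𝓝 (|x| / (1 - 0))) := by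
    refine tendsto_const_nhds.div (tendsto_const_nhds.sub ?_) (by simp)
    exact (tendsto_pow_atTop_nhds_zero_of_lt_one (sq_nonneg x)
      ((sq_lt_one_iff_abs_lt_one x).mpr hx)).comp (tendsto_add_atTop_nat 1)
  rw [sub_zero, div_one] at h1
  refine h1.congr fun i => ?_
  rw [Finset.prod_range_succ, norm_div, norm_div, norm_mul, norm_pow, norm_pow, Real.norm_eq_abs,
    Real.norm_eq_abs, Real.norm_eq_abs, abs_of_pos (hD i), abs_of_pos (hy i)]
  have := (hD i).ne'
  have := (hy i).ne'
  have : |x| ≠ 0 := by simpa using hx0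
  rw [pow_succ |x|]
  field_simp

set_option maxHeartbeats 1000000 in
/-- Euler's identity `∑ x ^ i / ∏_{l = 1}^i (1 - x ^ (2 l)) = ∏ (1 + x ^ r)`. The series
`G z = ∑ z ^ i / ∏_{l = 1}^i (1 - x ^ (2 l))` satisfies `G (x ^ 2 * z) = (1 - z) * G z`, so that
`G x * ∏_{s < N} (1 - x ^ (2 s + 1)) = G (x ^ (2 N + 1))` tends to `1`; the remaining step is the
finite form of the equality between partitions into distinct parts and into odd parts. -/
theorem euler_identity {x : ℝ} (hx0 : x ≠ 0) (hx : |x| < 1) :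
    ∑' i : ℕ, x ^ i / ∏ l ∈ Finset.range i, (1 - (x ^ 2) ^ (l + 1)) =
      ∏' r : ℕ, (1 + x ^ (r + 1)) := by
  have hy1 : x ^ 2 < 1 := (sq_lt_one_iff_abs_lt_one x).mpr hx
  have hy : ∀ l : ℕ, 0 < 1 - (x ^ 2) ^ (l + 1) := fun l => by
    have : (x ^ 2) ^ (l + 1) < 1 := pow_lt_one₀ (sq_nonneg x) hy1 (Nat.succ_ne_zero l)
    linarith
  set D : ℕ → ℝ := fun i => ∏ l ∈ Finset.range i, (1 - (x ^ 2) ^ (l + 1)) with hDdef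
  have hD : ∀ i, 0 < D i := fun i => Finset.prod_pos fun l _ => hy l
  set G : ℝ → ℝ := fun z => ∑' i : ℕ, z ^ i / D i with hG
  have hsum0 : Summable fun i : ℕ => |x| ^ i / D i := by
    refine (euler_summable hx0 hx).norm.congr fun i => ?_
    rw [norm_div, norm_pow, Real.norm_eq_abs, Real.norm_eq_abs, abs_of_pos (hD i)]
  have hbd : ∀ z : ℝ, |z| ≤ |x| → ∀ i : ℕ, ‖z ^ i / D i‖ ≤ |x| ^ i / D i := fun z hz i => by
    rw [norm_div, norm_pow, Real.norm_eq_abs, Real.norm_eq_abs, abs_of_pos (hD i)]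
    have := hD i
    gcongr
  have hsum : ∀ z : ℝ, |z| ≤ |x| → Summable fun i : ℕ => z ^ i / D i := fun z hz =>
    Summable.of_norm_bounded hsum0 (hbd z hz)
  have hpow : ∀ N : ℕ, |x ^ (2 * N + 1)| ≤ |x| := fun N => by
    rw [abs_pow, pow_succ]
    exact mul_le_of_le_one_left (abs_nonneg x) (pow_le_one₀ (abs_nonneg x) hx.le)
  have hfun : ∀ z : ℝ, |z| ≤ |x| → G (x ^ 2 * z) = G z * (1 - z) := by
    intro z hz
    have hz2 : |x ^ 2 * z| ≤ |x| := by
      rw [abs_mul, abs_of_nonneg (sq_nonneg x)]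
      exact (mul_le_of_le_one_left (abs_nonneg z) hy1.le).trans hz
    have h1 : G z - G (x ^ 2 * z) = z * G z := by
      simp only [hG]
      rw [← (hsum z hz).tsum_sub (hsum _ hz2), ((hsum z hz).sub (hsum _ hz2)).tsum_eq_zero_add,
        ← tsum_mul_left]
      simp only [pow_zero, sub_self, zero_add]
      refine tsum_congr fun i => ?_
      have h2 : D (i + 1) = D i * (1 - (x ^ 2) ^ (i + 1)) := Finset.prod_range_succ _ _
      rw [h2, mul_pow]
      have := (hD i).ne'
      have := (hy i).ne'
      rw [← sub_div, ← one_sub_mul, pow_succ z]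
      field_simp
    linarith
  -- Iterating the functional equation from `x` to `x ^ (2 N + 1)`.
  have hO : ∀ N : ℕ, G (x ^ (2 * N + 1)) = G x * ∏ s ∈ Finset.range N, (1 - x ^ (2 * s + 1)) := by
    intro N
    induction N with
    | zero => simp
    | succ N ih =>
      rw [Finset.prod_range_succ, ← mul_assoc, ← ih, ← hfun _ (hpow N)]
      congr 1; ring
  have hlim1 : Tendsto (fun N : ℕ => G x * ∏ s ∈ Finset.range N, (1 - x ^ (2 * s + 1))) atTop
      (𝓝 1) := by
    have h0 : Tendsto (fun N : ℕ => x ^ (2 * N + 1)) atTop (𝓝 0) :=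
      (tendsto_pow_atTop_nhds_zero_of_abs_lt_one hx).comp
        (tendsto_atTop_mono (fun N => by change N ≤ 2 * N + 1; omega) tendsto_id)
    have h1 : Tendsto (fun N : ℕ => G (x ^ (2 * N + 1))) atTop (𝓝 (∑' i : ℕ, (0 : ℝ) ^ i / D i)) :=
      tendsto_tsum_of_dominated_convergence hsum0
        (fun i => ((h0.pow i).div_const _)) (Eventually.of_forall fun N i => hbd _ (hpow N) i)
    have h2 : ∑' i : ℕ, (0 : ℝ) ^ i / D i = 1 := by
      rw [tsum_eq_single 0 (fun i hi => by simp [hi])]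
      simp [hDdef]
    rw [h2] at h1
    exact h1.congr hO
  -- The finite form of `∏ (1 + x ^ r) * ∏ (1 - x ^ (2 s + 1)) = 1`.
  have hfin : ∀ N : ℕ, (∏ r ∈ Finset.range (2 * N), (1 + x ^ (r + 1))) *
      (∏ s ∈ Finset.range N, (1 - x ^ (2 * s + 1))) * D N = D (2 * N) := by
    intro N
    induction N with
    | zero => simp [hDdef]
    | succ N ih =>
      have h2 : ∀ i, D (i + 1) = D i * (1 - (x ^ 2) ^ (i + 1)) := fun i =>
        Finset.prod_range_succ _ _
      rw [show 2 * (N + 1) = 2 * N + 1 + 1 by ring, Finset.prod_range_succ, Finset.prod_range_succ,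
        Finset.prod_range_succ _ N, h2, h2, h2, ← ih]
      ring
  have hsy : Summable fun l : ℕ => (x ^ 2) ^ (l + 1) :=
    (summable_nat_add_iff 1).mpr (summable_geometric_of_lt_one (sq_nonneg x) hy1)
  have hsx : Summable fun l : ℕ => |x ^ (l + 1)| := by
    simp_rw [abs_pow]
    exact (summable_nat_add_iff 1).mpr (summable_geometric_of_lt_one (abs_nonneg x) hx)
  have hDlim : ∃ d : ℝ, d ≠ 0 ∧ Tendsto D atTop (𝓝 d) := by
    have hn : Summable fun l : ℕ => ‖-(x ^ 2) ^ (l + 1)‖ := by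
      refine hsy.congr fun l => ?_
      rw [norm_neg, Real.norm_eq_abs, abs_of_nonneg (by positivity)]
    refine ⟨∏' l : ℕ, (1 + -(x ^ 2) ^ (l + 1)), ?_, ?_⟩
    · exact tprod_one_add_ne_zero_of_summable (fun l => by
        rw [← sub_eq_add_neg]; exact (hy l).ne') hn
    · refine (multipliable_one_add_of_summable hn).tendsto_prod_tprod_nat.congr fun N => ?_
      simp only [hDdef, sub_eq_add_neg]
  obtain ⟨d, hd0, hd⟩ := hDlim
  have hE : Tendsto (fun N : ℕ => ∏ r ∈ Finset.range (2 * N), (1 + x ^ (r + 1))) atTop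
      (𝓝 (∏' r : ℕ, (1 + x ^ (r + 1)))) :=
    (multipliable_one_add_of_summable hsx).tendsto_prod_tprod_nat.comp
      (tendsto_atTop_mono (fun N => by change N ≤ 2 * N; omega) tendsto_id)
  have hD2 : Tendsto (fun N : ℕ => G x * D (2 * N)) atTop (𝓝 (G x * d)) :=
    tendsto_const_nhds.mul (hd.comp
      (tendsto_atTop_mono (fun N => by change N ≤ 2 * N; omega) tendsto_id))
  have := tendsto_nhds_unique (((hE.mul hlim1).mul hd).congr fun N => by
    rw [← hfin N]; ring) hD2
  rw [mul_one] at this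
  exact (mul_right_cancel₀ hd0 this).symm

/-- Closed form for the partial sums of `∑ (-1) ^ i ∏_{l < i} (x - Q ^ l) / (Q ^ (l + 1) - 1)`;
it vanishes at `x = Q, Q ^ 2, …, Q ^ N`. -/
theorem telescope {Q : ℝ} (hQ : 1 < Q) (x : ℝ) (N : ℕ) :
    ∑ i ∈ Finset.range (N + 1), (-1) ^ i * (∏ l ∈ Finset.range i, (x - Q ^ l)) /
        (∏ l ∈ Finset.range i, (Q ^ (l + 1) - 1)) =
      (-1) ^ N * (∏ l ∈ Finset.range N, (x - Q ^ (l + 1))) /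
        (∏ l ∈ Finset.range N, (Q ^ (l + 1) - 1)) := by
  have hpos : ∀ l : ℕ, 0 < Q ^ (l + 1) - 1 := fun l => by
    exact sub_pos.mpr (one_lt_pow₀ hQ (Nat.succ_ne_zero l))
  induction N with
  | zero => simp
  | succ N ih =>
    rw [Finset.sum_range_succ, ih, Finset.prod_range_succ' (fun l => x - Q ^ l),
      Finset.prod_range_succ (fun l => x - Q ^ (l + 1)),
      Finset.prod_range_succ (fun l => Q ^ (l + 1) - 1)]
    have h1 := (hpos N).ne'
    have h2 : (∏ l ∈ Finset.range N, (Q ^ (l + 1) - 1)) ≠ 0 :=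
      (Finset.prod_pos fun l _ => hpos l).ne'
    field_simp
    ring

/-- The coefficients inverting the system of moments: `invCoeff Q k i` is the coefficient of the
moment of order `k + i` in the formula for the probability of dimension `k`. -/
noncomputable def invCoeff (Q : ℝ) (k i : ℕ) : ℝ :=
  (-1) ^ i / ((∏ l ∈ Finset.range k, (Q ^ k - Q ^ l)) * Q ^ (k * i) *
    ∏ l ∈ Finset.range i, (Q ^ (l + 1) - 1))

theorem prod_pow_sub_pow_pos {Q : ℝ} (hQ : 1 < Q) (k : ℕ) :
    0 < ∏ l ∈ Finset.range k, (Q ^ k - Q ^ l) :=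
  Finset.prod_pos fun l hl => by
    have := pow_lt_pow_right₀ hQ (Finset.mem_range.mp hl)
    linarith

/-- The indicator of `d = k` as a combination of the polynomials `∏_{l < j} (X - Q ^ l)`,
`j ≥ k`, at `X = Q ^ d`. -/
theorem inversion {Q : ℝ} (hQ : 1 < Q) (k d N : ℕ) (hd : d ≤ k + N) :
    ∑ i ∈ Finset.range (N + 1), invCoeff Q k i * ∏ l ∈ Finset.range (k + i), (Q ^ d - Q ^ l) =
      if d = k then 1 else 0 := by
  rcases lt_or_ge d k with h | h
  · rw [if_neg h.ne]
    refine Finset.sum_eq_zero fun i _ => ?_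
    rw [Finset.prod_eq_zero (i := d) (Finset.mem_range.mpr (by omega)) (sub_self _), mul_zero]
  obtain ⟨m, rfl⟩ := Nat.exists_eq_add_of_le h
  have hQ0 : Q ≠ 0 := by positivity
  have key : ∀ i, invCoeff Q k i * ∏ l ∈ Finset.range (k + i), (Q ^ (k + m) - Q ^ l) =
      (∏ l ∈ Finset.range k, (Q ^ (k + m) - Q ^ l)) / (∏ l ∈ Finset.range k, (Q ^ k - Q ^ l)) *
      ((-1) ^ i * (∏ l ∈ Finset.range i, (Q ^ m - Q ^ l)) /
        (∏ l ∈ Finset.range i, (Q ^ (l + 1) - 1))) := by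
    intro i
    have h1 : ∏ l ∈ Finset.range i, (Q ^ (k + m) - Q ^ (k + l)) =
        Q ^ (k * i) * ∏ l ∈ Finset.range i, (Q ^ m - Q ^ l) := by
      simp only [pow_add Q k, ← mul_sub, Finset.prod_mul_distrib, Finset.prod_const,
        Finset.card_range, pow_mul]
    rw [Finset.prod_range_add, h1, invCoeff]
    have := (prod_pow_sub_pow_pos hQ k).ne'
    have : Q ^ (k * i) ≠ 0 := by positivity
    have : ∏ l ∈ Finset.range i, (Q ^ (l + 1) - 1) ≠ 0 :=
      (Finset.prod_pos fun l _ => sub_pos.mpr (one_lt_pow₀ hQ (Nat.succ_ne_zero l))).ne'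
    field_simp
  simp_rw [key]
  rw [← Finset.mul_sum, telescope hQ]
  rcases Nat.eq_zero_or_pos m with rfl | hm
  · rw [← telescope hQ, Finset.sum_range_succ', Finset.sum_eq_zero]
    · simp [div_self (prod_pow_sub_pow_pos hQ k).ne']
    · intro i _
      rw [Finset.prod_range_succ']; simp
  · rw [Finset.prod_eq_zero (s := Finset.range N) (i := m - 1) (Finset.mem_range.mpr (by omega))]
    · simp [hm.ne']
    · rw [Nat.sub_add_cancel hm, sub_self]

/-- The terms of the limiting series, up to a constant factor, are those of Euler's identity at
`x = -1 / q`. -/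
theorem invCoeff_mul {q : ℝ} (hq : 1 < q) (k i : ℕ) :
    invCoeff (q ^ 2) k i * q ^ ((k + i) ^ 2) =
      (1 / q ^ (k ^ 2)) / (∏ j ∈ Finset.range k, (1 - 1 / q ^ (2 * (j + 1)))) *
        ((1 / -q) ^ i / ∏ l ∈ Finset.range i, (1 - ((1 / -q) ^ 2) ^ (l + 1))) := by
  have hq0 : q ≠ 0 := by positivity
  have hfac : ∀ l : ℕ, 1 - 1 / q ^ (2 * (l + 1)) ≠ 0 := fun l => by
    have := one_lt_pow₀ hq (show 2 * (l + 1) ≠ 0 by omega)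
    have h := (div_lt_one (by positivity)).mpr this
    exact (sub_pos.mpr h).ne'
  have h1 : ∏ l ∈ Finset.range k, ((q ^ 2) ^ k - (q ^ 2) ^ l) =
      q ^ (2 * k ^ 2) * ∏ j ∈ Finset.range k, (1 - 1 / q ^ (2 * (j + 1))) := by
    rw [← Finset.prod_range_reflect (fun j => 1 - 1 / q ^ (2 * (j + 1)))]
    rw [show q ^ (2 * k ^ 2) = ∏ l ∈ Finset.range k, (q ^ 2) ^ k by
      rw [Finset.prod_const, Finset.card_range]; ring, ← Finset.prod_mul_distrib]
    refine Finset.prod_congr rfl fun l hl => ?_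
    have hl := Finset.mem_range.mp hl
    obtain ⟨m, rfl⟩ := Nat.exists_eq_add_of_lt hl
    rw [show l + m + 1 - 1 - l + 1 = m + 1 by omega]
    field_simp
    ring
  have h2 : ∏ l ∈ Finset.range i, ((q ^ 2) ^ (l + 1) - 1) =
      q ^ (i ^ 2 + i) * ∏ l ∈ Finset.range i, (1 - ((1 / -q) ^ 2) ^ (l + 1)) := by
    induction i with
    | zero => simp
    | succ i ih =>
      rw [Finset.prod_range_succ, Finset.prod_range_succ, ih,
        show (i + 1) ^ 2 + (i + 1) = i ^ 2 + i + 2 * (i + 1) by ring, pow_add,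
        show (1 / -q) ^ 2 = 1 / q ^ 2 by rw [div_pow, neg_sq, one_pow]]
      have : (q ^ 2) ^ (i + 1) - 1 = q ^ (2 * (i + 1)) * (1 - (1 / q ^ 2) ^ (i + 1)) := by
        rw [div_pow, one_pow, ← pow_mul]; field_simp
      rw [this]; ring
  have h3 : ∏ j ∈ Finset.range k, (1 - 1 / q ^ (2 * (j + 1))) ≠ 0 :=
    Finset.prod_ne_zero_iff.mpr fun l _ => hfac l
  have h4 : ∏ l ∈ Finset.range i, (1 - ((1 / -q) ^ 2) ^ (l + 1)) ≠ 0 :=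
    Finset.prod_ne_zero_iff.mpr fun l _ => by
      have := hfac l
      rwa [show (1 / -q) ^ 2 = 1 / q ^ 2 by rw [div_pow, neg_sq, one_pow], div_pow, one_pow,
        ← pow_mul]
  rw [invCoeff, h1, h2]
  set A := ∏ j ∈ Finset.range k, (1 - 1 / q ^ (2 * (j + 1)))
  set B := ∏ l ∈ Finset.range i, (1 - ((1 / -q) ^ 2) ^ (l + 1))
  rw [show (1 / -q) ^ i = (-1) ^ i / q ^ i by rw [← div_pow]; congr 1; field_simp]
  field_simp
  ring

/-- The limit of `p n` when it is recovered by `invCoeff` from moments `M n j` that never exceed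
`q ^ (j ^ 2)` and are equal to it once `n ≥ 2 j`. -/
theorem tendsto_of_moments {q : ℝ} (hq : 1 < q) (k : ℕ) (p : ℕ → ℝ) (M : ℕ → ℕ → ℝ)
    (hM0 : ∀ n j, 0 ≤ M n j) (hM1 : ∀ n j, M n j ≤ q ^ (j ^ 2))
    (hM2 : ∀ n j, 2 * j ≤ n → M n j = q ^ (j ^ 2))
    (hp : ∀ n, p n = ∑' i, invCoeff (q ^ 2) k i * M n (k + i)) :
    Tendsto p atTop (𝓝 ((∏' r : ℕ, (1 + 1 / (-q) ^ (r + 1))) * (1 / q ^ (k ^ 2)) /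
        ∏ j ∈ Finset.range k, (1 - 1 / q ^ (2 * (j + 1))))) := by
  have hx0 : (1 / -q) ≠ 0 := by
    have : q ≠ 0 := by positivity
    simpa using this
  have hx : |1 / -q| < 1 := by
    rw [abs_div, abs_neg, abs_one, abs_of_pos (by positivity)]
    exact (div_lt_one (by positivity)).mpr hq
  have hs : Summable fun i => invCoeff (q ^ 2) k i * q ^ ((k + i) ^ 2) := by
    simp_rw [invCoeff_mul hq]
    exact (euler_summable hx0 hx).mul_left _
  have hlim : ∑' i, invCoeff (q ^ 2) k i * q ^ ((k + i) ^ 2) =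
      (∏' r : ℕ, (1 + 1 / (-q) ^ (r + 1))) * (1 / q ^ (k ^ 2)) /
        ∏ j ∈ Finset.range k, (1 - 1 / q ^ (2 * (j + 1))) := by
    simp_rw [invCoeff_mul hq]
    rw [tsum_mul_left, euler_identity hx0 hx]
    simp_rw [div_pow, one_pow]
    ring
  rw [← hlim, funext hp]
  refine tendsto_tsum_of_dominated_convergence hs.norm (fun i => ?_)
    (Eventually.of_forall fun n i => ?_)
  · refine tendsto_const_nhds.congr' ?_
    filter_upwards [eventually_ge_atTop (2 * (k + i))] with n hn
    rw [hM2 n _ hn]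
  · rw [norm_mul, norm_mul, Real.norm_eq_abs (M _ _), abs_of_nonneg (hM0 _ _),
      Real.norm_eq_abs (q ^ _), abs_of_nonneg (by positivity)]
    exact mul_le_mul_of_nonneg_left (hM1 _ _) (norm_nonneg _)

end Analysis

/-! ### Witt's theorem for the standard Hermitian form

The form is `⟨u, v⟩ = star u ⬝ᵥ v`. Only two properties of the involution are used: some element
has trace one (hypothesis `hT`), and every nonzero fixed element is a norm (hypothesis `hN`).
These also cover characteristic two. -/

variable {F : Type} [Field F] [StarRing F]

theorem star_dotProduct_comm {n : ℕ} (u v : Fin n → F) :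
    star (star u ⬝ᵥ v) = star v ⬝ᵥ u := by
  rw [star_dotProduct, star_star]

/-- Products with linearly independent vectors may be prescribed arbitrarily. -/
theorem exists_forall_dotProduct_eq {j n : ℕ} {g : Fin j → Fin n → F}
    (hg : LinearIndependent F g) (c : Fin j → F) : ∃ v, ∀ i, star (g i) ⬝ᵥ v = c i := by
  have hli : LinearIndependent F (fun i => star (g i)) := by
    rw [Fintype.linearIndependent_iff] at hg ⊢
    intro a ha i
    have := hg (fun i => star (a i)) (by
      have h := congrArg star ha
      simpa [star_sum, star_smul] using h) i
    simpa using this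
  let M : Matrix (Fin j) (Fin n) F := Matrix.of fun i => star (g i)
  have hr : M.rank = j := by
    have := LinearIndependent.rank_matrix (M := M) hli
    simpa using this
  have hsurj : Function.Surjective M.mulVecLin := by
    rw [← LinearMap.range_eq_top]
    apply Submodule.eq_top_of_finrank_eq
    rw [← Matrix.rank, hr]; simp
  obtain ⟨v, hv⟩ := hsurj c
  exact ⟨v, fun i => congrFun hv i⟩

/-- If the form is nondegenerate on the proper subspace spanned by `f` (expressed by `hnd` in terms
of coefficients, so that `f` is also linearly independent), its orthogonal complement contains a
vector of norm one. -/
theorem exists_unit_perp {j n : ℕ} {f : Fin j → Fin n → F}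
    (hT : ∃ t : F, t + star t = 1)
    (hN : ∀ d : F, star d = d → d ≠ 0 → ∃ a : F, star a * a = d)
    (hjn : j < n)
    (hnd : ∀ a : Fin j → F, (∀ i, star (f i) ⬝ᵥ (∑ k, a k • f k) = 0) → a = 0) :
    ∃ v, (∀ i, star (f i) ⬝ᵥ v = 0) ∧ star v ⬝ᵥ v = 1 := by
  obtain ⟨t, ht⟩ := hT
  let Γ : (Fin j → F) →ₗ[F] (Fin j → F) :=
    { toFun := fun a i => star (f i) ⬝ᵥ (∑ k, a k • f k)
      map_add' := by
        intro a b; ext i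
        simp [add_smul, Finset.sum_add_distrib, dotProduct_add]
      map_smul' := by
        intro c a; ext i
        simp [mul_smul, ← Finset.smul_sum, dotProduct_smul] }
  have hΓ : Function.Surjective Γ := by
    rw [← LinearMap.injective_iff_surjective, ← LinearMap.ker_eq_bot, LinearMap.ker_eq_bot']
    intro a ha
    exact hnd a fun i => congrFun ha i
  have hdec : ∀ w : Fin n → F, ∃ a : Fin j → F, ∀ i, star (f i) ⬝ᵥ (w - ∑ k, a k • f k) = 0 := by
    intro w
    obtain ⟨a, ha⟩ := hΓ (fun i => star (f i) ⬝ᵥ w)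
    refine ⟨a, fun i => ?_⟩
    have : star (f i) ⬝ᵥ (∑ k, a k • f k) = star (f i) ⬝ᵥ w := congrFun ha i
    rw [dotProduct_sub, this, sub_self]
  -- A nonzero vector `u` orthogonal to `span f`, which exists because `j < n`.
  obtain ⟨w, hw⟩ : ∃ w, w ∉ Submodule.span F (Set.range f) := by
    by_contra! h
    have htop : Submodule.span F (Set.range f) = ⊤ := by
      rw [eq_top_iff]; intro x _; exact h x
    have := finrank_range_le_card (R := F) f
    rw [Set.finrank, htop, finrank_top] at this
    simp at this
    omega
  obtain ⟨a, ha⟩ := hdec w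
  set u := w - ∑ k, a k • f k with hu
  have hu0 : u ≠ 0 := by
    intro h
    apply hw
    rw [hu, sub_eq_zero] at h
    rw [h]
    exact Submodule.sum_mem _ fun k _ => Submodule.smul_mem _ _ (Submodule.subset_span ⟨k, rfl⟩)
  obtain ⟨v, hv, hv0⟩ : ∃ v, (∀ i, star (f i) ⬝ᵥ v = 0) ∧ star v ⬝ᵥ v ≠ 0 := by
    by_contra! h
    have hpu : ∀ v, (∀ i, star (f i) ⬝ᵥ v = 0) → star v ⬝ᵥ u = 0 := by
      intro v hv
      by_contra hne
      -- Polarisation: `v + l u` is isotropic for every `l`, while `l ⟨v, u⟩` can be given trace one.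
      set l := t / (star v ⬝ᵥ u) with hl
      have h1 := h (v + l • u) (fun i => by simp [dotProduct_add, dotProduct_smul, hv, ha])
      have h2 : l * (star v ⬝ᵥ u) = t := div_mul_cancel₀ _ hne
      have h3 : star l * (star u ⬝ᵥ v) = star t := by
        rw [← star_dotProduct_comm, ← h2, star_mul, mul_comm]
      rw [star_add, star_smul, add_dotProduct, dotProduct_add, dotProduct_add, smul_dotProduct,
        smul_dotProduct, dotProduct_smul, dotProduct_smul, h v hv, h u ha] at h1
      simp only [smul_eq_mul, h2, h3] at h1
      rw [zero_add, mul_zero, mul_zero, add_zero, ht] at h1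
      exact one_ne_zero h1
    apply hu0
    have : ∀ w, star u ⬝ᵥ w = 0 := by
      intro w
      obtain ⟨b, hb⟩ := hdec w
      have h1 := hpu _ hb
      rw [← star_dotProduct_comm, star_eq_zero, dotProduct_sub, sub_eq_zero] at h1
      rw [h1, dotProduct_sum]
      refine Finset.sum_eq_zero fun k _ => ?_
      rw [dotProduct_smul, ← star_dotProduct_comm, ha k]; simp
    simpa using dotProduct_eq_zero _ this
  obtain ⟨c, hc⟩ := hN _ (star_dotProduct_comm v v) hv0
  have hc0 : c ≠ 0 := by rintro rfl; simp at hc; exact hv0 hc.symm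
  refine ⟨c⁻¹ • v, fun i => by rw [dotProduct_smul, hv]; simp, ?_⟩
  have hsc : star c ≠ 0 := by simpa using hc0
  rw [star_smul, smul_dotProduct, dotProduct_smul, ← hc, star_inv₀, smul_eq_mul, smul_eq_mul]
  field_simp

/-- Two families with the same Gram matrix, not spanning the whole space, can be enlarged by one
vector each, keeping the Gram matrices equal. If the form is nondegenerate on the span, unit vectors
in the orthogonal complements are added; otherwise a vector not orthogonal to the radical is
added. -/
theorem witt_step {j n : ℕ} {f g : Fin j → Fin n → F}
    (hT : ∃ t : F, t + star t = 1)
    (hN : ∀ d : F, star d = d → d ≠ 0 → ∃ a : F, star a * a = d)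
    (hjn : j < n) (hf : LinearIndependent F f) (hg : LinearIndependent F g)
    (hG : ∀ i k, star (f i) ⬝ᵥ f k = star (g i) ⬝ᵥ g k) :
    ∃ v w : Fin n → F, v ∉ Submodule.span F (Set.range f) ∧ w ∉ Submodule.span F (Set.range g) ∧
      (∀ i, star (f i) ⬝ᵥ v = star (g i) ⬝ᵥ w) ∧ star v ⬝ᵥ v = star w ⬝ᵥ w := by
  have hsum : ∀ (a : Fin j → F) i,
      star (f i) ⬝ᵥ (∑ k, a k • f k) = star (g i) ⬝ᵥ (∑ k, a k • g k) := by
    intro a i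
    simp only [dotProduct_sum, dotProduct_smul, hG]
  -- A vector having nonzero product with something orthogonal to a family is outside its span.
  have hout : ∀ (h : Fin j → Fin n → F) (r v : Fin n → F), (∀ i, star (h i) ⬝ᵥ r = 0) →
      star v ⬝ᵥ r ≠ 0 → v ∉ Submodule.span F (Set.range h) := by
    intro h r v hr hv hmem
    obtain ⟨a, rfl⟩ := (Submodule.mem_span_range_iff_exists_fun F).mp hmem
    apply hv
    simp [star_sum, sum_dotProduct, hr, star_smul, smul_dotProduct]
  by_cases hnd : ∀ a : Fin j → F, (∀ i, star (f i) ⬝ᵥ (∑ k, a k • f k) = 0) → a = 0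
  · obtain ⟨v, hv, hv1⟩ := exists_unit_perp hT hN hjn hnd
    obtain ⟨w, hw, hw1⟩ := exists_unit_perp (f := g) hT hN hjn
      (fun a ha => hnd a fun i => by rw [hsum, ha])
    exact ⟨v, w, hout f v v hv (by simp [hv1]), hout g w w hw (by simp [hw1]),
      fun i => by rw [hv, hw], by rw [hv1, hw1]⟩
  · push Not at hnd
    obtain ⟨a, ha, ha0⟩ := hnd
    set r := ∑ k, a k • f k with hr
    set s := ∑ k, a k • g k with hs
    have hgs : ∀ i, star (g i) ⬝ᵥ s = 0 := fun i => by rw [← hsum, ha]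
    have hr0 : r ≠ 0 := by
      intro h
      exact ha0 (funext fun i => Fintype.linearIndependent_iff.mp hf a h i)
    obtain ⟨v, hv⟩ : ∃ v, star v ⬝ᵥ r ≠ 0 := by
      by_contra! h
      apply hr0
      apply dotProduct_eq_zero
      intro w
      rw [dotProduct_comm]
      simpa using h (star w)
    obtain ⟨w, hw⟩ := exists_forall_dotProduct_eq hg (fun i => star (f i) ⬝ᵥ v)
    have hrv : star v ⬝ᵥ r = star w ⬝ᵥ s := by
      simp only [hr, hs, dotProduct_sum, dotProduct_smul]
      refine Finset.sum_congr rfl fun k _ => ?_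
      rw [← star_dotProduct_comm, ← hw, star_dotProduct_comm]
    have hss : star s ⬝ᵥ s = 0 := by
      conv_lhs => arg 1; rw [hs]
      simp [star_sum, sum_dotProduct, hgs, star_smul, smul_dotProduct]
    obtain ⟨t, ht⟩ := hT
    set e := star v ⬝ᵥ v - star w ⬝ᵥ w with he
    have hse : star e = e := by rw [he, star_sub, star_dotProduct_comm, star_dotProduct_comm]
    -- Moving `w` along the radical vector `s` changes `⟨w, w⟩` by an arbitrary trace.
    set l := e * t / (star w ⬝ᵥ s) with hl
    have hws : star w ⬝ᵥ s ≠ 0 := hrv ▸ hv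
    have h2 : l * (star w ⬝ᵥ s) = e * t := div_mul_cancel₀ _ hws
    have h3 : star l * (star s ⬝ᵥ w) = e * star t := by
      rw [← star_dotProduct_comm, mul_comm, ← star_mul, h2, star_mul, hse, mul_comm]
    refine ⟨v, w + l • s, hout f r v ha hv, hout g s _ hgs ?_, ?_, ?_⟩
    · simpa [star_add, add_dotProduct, star_smul, smul_dotProduct, hss] using hws
    · intro i
      simp [dotProduct_add, dotProduct_smul, hw, hgs]
    · rw [star_add, star_smul, add_dotProduct, dotProduct_add, dotProduct_add, smul_dotProduct,
        smul_dotProduct, dotProduct_smul, dotProduct_smul, hss]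
      simp only [smul_eq_mul, h2, h3]
      have : e * t + e * star t = e := by rw [← mul_add, ht, mul_one]
      linear_combination -this + he

/-- Witt's theorem: an isometry between subspaces extends to a unitary matrix. Here `m` is the
codimension, and both families are enlarged to bases with the same Gram matrix. -/
theorem witt {n : ℕ} (hT : ∃ t : F, t + star t = 1)
    (hN : ∀ d : F, star d = d → d ≠ 0 → ∃ a : F, star a * a = d) (m : ℕ) :
    ∀ (j : ℕ) (f g : Fin j → Fin n → F), j + m = n → LinearIndependent F f →
      LinearIndependent F g → (∀ i k, star (f i) ⬝ᵥ f k = star (g i) ⬝ᵥ g k) →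
      ∃ A ∈ unitaryGroup (Fin n) F, ∀ i, A *ᵥ f i = g i := by
  induction m with
  | zero =>
    intro j f g hj hf hg hG
    obtain rfl : j = n := by omega
    let P : Matrix (Fin j) (Fin j) F := (Matrix.of f)ᵀ
    let R : Matrix (Fin j) (Fin j) F := (Matrix.of g)ᵀ
    have hP : IsUnit P.det := by
      rw [← Matrix.isUnit_iff_isUnit_det, ← Matrix.linearIndependent_cols_iff_isUnit]
      exact hf
    have hGG : Pᴴ * P = Rᴴ * R := by
      ext i k
      exact hG i k
    have hP1 : P * P⁻¹ = 1 := Matrix.mul_nonsing_inv P hP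
    refine ⟨R * P⁻¹, ?_, fun i => ?_⟩
    · rw [mem_unitaryGroup_iff', star_eq_conjTranspose, conjTranspose_mul, Matrix.mul_assoc,
        ← Matrix.mul_assoc Rᴴ, ← hGG, Matrix.mul_assoc, hP1, Matrix.mul_one, ← conjTranspose_mul,
        hP1, conjTranspose_one]
    · have h : R * P⁻¹ * P = R := by
        rw [Matrix.mul_assoc, Matrix.nonsing_inv_mul P hP, Matrix.mul_one]
      funext k
      exact congrFun (congrFun h k) i
  | succ m ih =>
    intro j f g hj hf hg hG
    obtain ⟨v, w, hv, hw, hvw, hvv⟩ := witt_step hT hN (by omega) hf hg hG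
    obtain ⟨A, hA, hAf⟩ := ih (j + 1) (Fin.cons v f) (Fin.cons w g) (by omega)
      (linearIndependent_finCons.mpr ⟨hf, hv⟩) (linearIndependent_finCons.mpr ⟨hg, hw⟩) (by
        intro i k
        refine Fin.cases ?_ (fun i => ?_) i <;> refine Fin.cases ?_ (fun k => ?_) k
        · simpa using hvv
        · simp only [Fin.cons_zero, Fin.cons_succ]
          rw [← star_dotProduct_comm, hvw, star_dotProduct_comm]
        · simpa using hvw i
        · simpa using hG i k)
    exact ⟨A, hA, fun i => by simpa using hAf i.succ⟩

/-- Every Hermitian matrix `H` of size `j` is a Gram matrix of independent vectors of `F ^ n` when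
`2 j ≤ n`. If `star a * a = -1` and `C + Cᴴ = H - 1`, the columns of the block matrix with rows
`C + 1`, `a • C`, `0` have Gram matrix `(C + 1)ᴴ (C + 1) - Cᴴ C = H`. -/
theorem exists_gram {j n : ℕ} (hjn : 2 * j ≤ n) (hT : ∃ t : F, t + star t = 1)
    (hN : ∀ d : F, star d = d → d ≠ 0 → ∃ a : F, star a * a = d)
    (H : Matrix (Fin j) (Fin j) F) (hH : Hᴴ = H) :
    ∃ f : Fin j → Fin n → F, LinearIndependent F f ∧ ∀ i k, star (f i) ⬝ᵥ f k = H i k := by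
  obtain ⟨t, ht⟩ := hT
  obtain ⟨a, ha⟩ := hN (-1) (by simp) (by simp)
  obtain ⟨m, rfl⟩ := Nat.exists_eq_add_of_le hjn
  let e : Fin (2 * j + m) ≃ Fin j ⊕ Fin j ⊕ Fin m :=
    (finCongr (by ring)).trans (finSumFinEquiv.symm.trans
      (Equiv.sumCongr (Equiv.refl _) finSumFinEquiv.symm))
  let C : Matrix (Fin j) (Fin j) F := t • (H - 1)
  have hC : C + Cᴴ = H - 1 := by
    have : C + Cᴴ = (t + star t) • (H - 1) := by
      simp only [C, conjTranspose_smul, conjTranspose_sub, hH, conjTranspose_one, add_smul]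
    rw [this, ht, one_smul]
  let Y : Matrix (Fin j ⊕ Fin j ⊕ Fin m) (Fin j) F := fromRows (C + 1) (fromRows (a • C) 0)
  let X : Matrix (Fin (2 * j + m)) (Fin j) F := Y.submatrix e id
  have hY : Yᴴ * Y = H := by
    simp only [Y, conjTranspose_fromRows_eq_fromCols_conjTranspose, fromCols_mul_fromRows]
    simp only [conjTranspose_add, conjTranspose_smul, conjTranspose_one, Matrix.mul_zero, add_zero,
      Matrix.smul_mul, Matrix.mul_smul, smul_smul, Matrix.add_mul, Matrix.mul_add]
    have : H = C + Cᴴ + 1 := by rw [hC]; simp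
    rw [this, mul_comm a, ha]; simp; abel
  have hX : Xᴴ * X = H := by
    rw [← hY]
    simp only [X, conjTranspose_submatrix]
    rw [Matrix.submatrix_mul_equiv]; rfl
  refine ⟨fun i => X.col i, ?_, fun i k => congrFun (congrFun hX i) k⟩
  change LinearIndependent F X.col
  rw [← Matrix.mulVec_injective_iff, ← Matrix.coe_mulVecLin, ← LinearMap.ker_eq_bot,
    LinearMap.ker_eq_bot']
  intro v hv
  have hYv : Y *ᵥ v = 0 := by
    funext x
    have := congrFun hv (e.symm x)
    simpa [X, mulVec, dotProduct] using this
  simp only [Y, fromRows_mulVec] at hYv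
  have h1 : (C + 1) *ᵥ v = 0 := by
    funext x; simpa using congrFun hYv (Sum.inl x)
  have h2 : (a • C) *ᵥ v = 0 := by
    funext x; simpa using congrFun hYv (Sum.inr (Sum.inl x))
  have ha0 : a ≠ 0 := by rintro rfl; simp at ha
  rw [smul_mulVec] at h2
  have h3 : C *ᵥ v = 0 := (smul_eq_zero.mp h2).resolve_left ha0
  rwa [add_mulVec, h3, one_mulVec, zero_add] at h1

/-! ### Orbits on frames and Burnside's lemma -/

/-- Linearly independent `j`-tuples of vectors of `F ^ n`. -/
def Frame (F : Type) [Field F] (n j : ℕ) : Type :=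
  {f : Fin j → Fin n → F // LinearIndependent F f}

instance (n j : ℕ) [Finite F] : Finite (Frame F n j) :=
  inferInstanceAs (Finite {f : Fin j → Fin n → F // LinearIndependent F f})

theorem unitary_mulVec_injective {n : ℕ} (A : unitaryGroup (Fin n) F) :
    Function.Injective (fun v => A.1 *ᵥ v) := by
  intro v w h
  have h1 : star A.1 * A.1 = 1 := mem_unitaryGroup_iff'.mp A.2
  have h2 := congrArg (fun u => star A.1 *ᵥ u) h
  simpa [mulVec_mulVec, h1] using h2

/-- The unitary group acts on frames vector by vector. -/
instance (n j : ℕ) : SMul (unitaryGroup (Fin n) F) (Frame F n j) where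
  smul A f := ⟨fun i => A.1 *ᵥ f.1 i,
    f.2.map' A.1.mulVecLin (LinearMap.ker_eq_bot.mpr (unitary_mulVec_injective A))⟩

theorem smul_val {n j : ℕ} (A : unitaryGroup (Fin n) F) (f : Frame F n j) (i : Fin j) :
    (A • f).1 i = A.1 *ᵥ f.1 i := by
  with_unfolding_all rfl

instance (n j : ℕ) : MulAction (unitaryGroup (Fin n) F) (Frame F n j) where
  one_smul f := Subtype.ext (funext fun i => (smul_val 1 f i).trans (one_mulVec _))
  mul_smul A B f := Subtype.ext (funext fun i => by
    simp only [smul_val, mulVec_mulVec]; rfl)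

/-- The set of orbits of the unitary group on frames of length `j`. -/
abbrev Orbits (F : Type) [Field F] [StarRing F] (n j : ℕ) : Type :=
  Quotient (MulAction.orbitRel (unitaryGroup (Fin n) F) (Frame F n j))

theorem gram_smul {n j : ℕ} (A : unitaryGroup (Fin n) F) (f : Frame F n j) (i k : Fin j) :
    star ((A • f).1 i) ⬝ᵥ (A • f).1 k = star (f.1 i) ⬝ᵥ f.1 k := by
  have h1 : A.1ᴴ * A.1 = 1 := mem_unitaryGroup_iff'.mp A.2
  rw [smul_val, smul_val, star_mulVec, ← dotProduct_mulVec, mulVec_mulVec, h1, one_mulVec]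

/-- The Gram matrix of an orbit of frames. -/
def orbitGram {n j : ℕ} : Orbits F n j → {H : Matrix (Fin j) (Fin j) F // Hᴴ = H} :=
  Quotient.lift
    (fun f => ⟨Matrix.of fun i k => star (f.1 i) ⬝ᵥ f.1 k, by
      ext i k; exact star_dotProduct_comm _ _⟩)
    (by
      rintro _ f ⟨A, rfl⟩
      refine Subtype.ext ?_
      ext i k
      exact gram_smul A f i k)

theorem orbitGram_injective {n j : ℕ} (hT : ∃ t : F, t + star t = 1)
    (hN : ∀ d : F, star d = d → d ≠ 0 → ∃ a : F, star a * a = d) :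
    Function.Injective (orbitGram : Orbits F n j → _) := by
  intro x y
  induction x using Quotient.inductionOn with | _ f
  induction y using Quotient.inductionOn with | _ g
  intro h
  have hjn : j ≤ n := by simpa using f.2.fintype_card_le_finrank
  obtain ⟨A, hA, hAg⟩ := witt hT hN (n - j) j g.1 f.1 (by omega) g.2 f.2 (fun i k =>
    (congrFun (congrFun (congrArg Subtype.val h) i) k).symm)
  exact Quotient.sound ⟨⟨A, hA⟩, Subtype.ext (funext fun i => (smul_val _ _ i).trans (hAg i))⟩

theorem orbitGram_surjective {n j : ℕ} (hjn : 2 * j ≤ n) (hT : ∃ t : F, t + star t = 1)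
    (hN : ∀ d : F, star d = d → d ≠ 0 → ∃ a : F, star a * a = d) :
    Function.Surjective (orbitGram : Orbits F n j → _) := by
  rintro ⟨H, hH⟩
  obtain ⟨f, hf, hfH⟩ := exists_gram hjn hT hN H hH
  exact ⟨Quotient.mk _ ⟨f, hf⟩, Subtype.ext (by ext i k; exact hfH i k)⟩

theorem card_orbits_eq_zero {n j : ℕ} (hjn : n < j) : Nat.card (Orbits F n j) = 0 := by
  have : IsEmpty (Orbits F n j) := ⟨fun x => by
    induction x using Quotient.inductionOn with | _ f
    have : j ≤ n := by simpa using f.2.fintype_card_le_finrank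
    omega⟩
  exact Nat.card_of_isEmpty

/-- A frame fixed by `A` is a frame of the fixed space of `A`. -/
def fixedByEquiv {n j : ℕ} (A : unitaryGroup (Fin n) F) :
    MulAction.fixedBy (Frame F n j) A ≃
      {s : Fin j → LinearMap.ker (mulVecLin (A.1 - 1)) // LinearIndependent F s} where
  toFun f := ⟨fun i => ⟨f.1.1 i, by
      have h : A.1 *ᵥ f.1.1 i = f.1.1 i :=
        (smul_val A f.1 i).symm.trans (congrFun (congrArg Subtype.val f.2) i)
      rw [LinearMap.mem_ker, mulVecLin_apply, sub_mulVec, one_mulVec, h, sub_self]⟩,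
    LinearIndependent.of_comp (Submodule.subtype _) f.1.2⟩
  invFun s := ⟨⟨fun i => (s.1 i).1, s.2.map' (Submodule.subtype _) (Submodule.ker_subtype _)⟩,
    Subtype.ext (funext fun i => by
      have h := (s.1 i).2
      rw [LinearMap.mem_ker, mulVecLin_apply, sub_mulVec, one_mulVec, sub_eq_zero] at h
      exact (smul_val _ _ i).trans h)⟩
  left_inv _ := rfl
  right_inv _ := rfl

/-- The count of fixed frames. The right-hand side vanishes when `j` exceeds the dimension of the
fixed space, because of the factor with `l` equal to that dimension. -/
theorem card_fixedBy [Fintype F] {n j : ℕ} (A : unitaryGroup (Fin n) F) :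
    (Nat.card (MulAction.fixedBy (Frame F n j) A) : ℝ) = ∏ l ∈ Finset.range j,
      ((Fintype.card F : ℝ) ^ Module.finrank F (LinearMap.ker (mulVecLin (A.1 - 1))) -
        (Fintype.card F : ℝ) ^ l) := by
  rw [Nat.card_congr (fixedByEquiv A)]
  set K := LinearMap.ker (mulVecLin (A.1 - 1))
  rcases le_or_gt j (Module.finrank F K) with h | h
  · rw [card_linearIndependent h, Nat.cast_prod, Finset.prod_range]
    refine Finset.prod_congr rfl fun l _ => ?_
    rw [Nat.cast_sub (Nat.pow_le_pow_right Fintype.card_pos (l.2.le.trans h))]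
    push_cast; rfl
  · rw [Finset.prod_eq_zero (Finset.mem_range.mpr h) (sub_self _)]
    have : IsEmpty {s : Fin j → K // LinearIndependent F s} := ⟨fun s => by
      have : j ≤ Module.finrank F K := by simpa using s.2.fintype_card_le_finrank
      omega⟩
    simp

/-- Burnside's lemma for the action on frames, in the form of a moment identity for
`Q ^ dim (fixed space)`. -/
theorem burnside [Fintype F] {n j : ℕ} [Fintype (unitaryGroup (Fin n) F)] :
    ∑ A : unitaryGroup (Fin n) F, ∏ l ∈ Finset.range j,
      ((Fintype.card F : ℝ) ^ Module.finrank F (LinearMap.ker (mulVecLin (A.1 - 1))) -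
        (Fintype.card F : ℝ) ^ l) =
      Nat.card (Orbits F n j) * Nat.card (unitaryGroup (Fin n) F) := by
  simp_rw [← card_fixedBy]
  have := Nat.card_congr
    (MulAction.sigmaFixedByEquivOrbitsProdGroup (unitaryGroup (Fin n) F) (Frame F n j))
  rw [Nat.card_sigma, Nat.card_prod] at this
  exact_mod_cast this

/-- The proportion of unitary matrices with `k`-dimensional fixed space in terms of the numbers of
orbits on frames; the sum has only finitely many nonzero terms. -/
theorem card_fixed_dim [Fintype F] (hF : 1 < (Fintype.card F : ℝ)) (n k : ℕ) :
    (Nat.card {A : unitaryGroup (Fin n) F //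
      Module.finrank F (LinearMap.ker (mulVecLin (A.1 - 1))) = k} : ℝ) /
        Nat.card (unitaryGroup (Fin n) F) =
      ∑' i, invCoeff (Fintype.card F) k i * Nat.card (Orbits F n (k + i)) := by
  classical
  have := Fintype.ofFinite (unitaryGroup (Fin n) F)
  have hG : (Nat.card (unitaryGroup (Fin n) F) : ℝ) ≠ 0 := by
    exact_mod_cast Nat.card_pos.ne'
  rw [tsum_eq_sum (s := Finset.range (n + 1)) (fun i hi => by
    rw [card_orbits_eq_zero (by simp at hi; omega)]; simp), div_eq_iff hG, Finset.sum_mul]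
  simp_rw [mul_assoc, ← burnside, Finset.mul_sum]
  rw [Finset.sum_comm, Nat.card_eq_fintype_card, Fintype.card_subtype, Finset.card_filter]
  push_cast
  refine Finset.sum_congr rfl fun A _ => ?_
  rw [inversion hF]
  have := Submodule.finrank_le (LinearMap.ker (mulVecLin (A.1 - 1)))
  simp at this
  omega

/-- The involution `x ↦ x ^ q` of a field with `q ^ 2` elements. -/
@[reducible] def frobStar {F : Type} [Field F] [Fintype F] {q : ℕ} (hq : IsPrimePow q)
    (hF : Fintype.card F = q ^ 2) : StarRing F where
  star x := x ^ q
  star_involutive x := by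
    change (x ^ q) ^ q = x
    rw [← pow_mul, ← sq, ← hF, FiniteField.pow_card]
  star_mul x y := by
    change (x * y) ^ q = y ^ q * x ^ q
    rw [mul_pow, mul_comm]
  star_add x y := by
    change (x + y) ^ q = x ^ q + y ^ q
    obtain ⟨p, m, hp, hm, rfl⟩ := hq
    have := Fact.mk hp.nat_prime
    have hchar : CharP F p := by
      refine charP_of_card_eq_prime_pow (f := m * 2) ?_
      rw [hF, pow_mul]
    exact add_pow_char_pow x y p m

end RudvalisShinoda

open RudvalisShinoda in
/-- Rudvalis–Shinoda: as `n → ∞`, the proportion of elements of `U(n,q)` whose fixed space has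
dimension `k` converges to `[∏_{r=1}^∞ (1 + (-q)^{-r})] q^{-k²} / ∏_{j=1}^k (1 - q^{-2j})`. -/
theorem statement12 (q : ℕ) (hq : IsPrimePow q) (k : ℕ)
    (F : Type) [Field F] [Fintype F] (hF : Fintype.card F = q ^ 2) :
    Filter.Tendsto (fun n : ℕ =>
        (Nat.card {A : Matrix (Fin n) (Fin n) F //
            A * (A.map (fun x => x ^ q))ᵀ = 1 ∧
            Module.finrank F (LinearMap.ker (Matrix.mulVecLin (A - 1))) = k} : ℝ) /
          (Nat.card {A : Matrix (Fin n) (Fin n) F // A * (A.map (fun x => x ^ q))ᵀ = 1} : ℝ))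
      Filter.atTop
      (nhds ((∏' r : ℕ, (1 + 1 / (-(q : ℝ)) ^ (r + 1))) * (1 / (q : ℝ) ^ (k ^ 2)) /
        ∏ j ∈ Finset.range k, (1 - 1 / (q : ℝ) ^ (2 * (j + 1))))) := by
  let _ : StarRing F := frobStar hq hF
  have hs : ∀ x : F, star x = x ^ q := fun _ => rfl
  have hq1 : 1 < q := hq.one_lt
  have hqR : (1 : ℝ) < q := by exact_mod_cast hq1
  have hT := exists_trace_one hq1 hF hs
  have hN := exists_norm_eq hq1 hF hs
  have hFR : (Fintype.card F : ℝ) = (q : ℝ) ^ 2 := by exact_mod_cast hF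
  have hmem : ∀ (n : ℕ) (A : Matrix (Fin n) (Fin n) F),
      A * (A.map (fun x => x ^ q))ᵀ = 1 ↔ A ∈ unitaryGroup (Fin n) F := fun n A => by
    rw [mem_unitaryGroup_iff]; rfl
  refine tendsto_of_moments hqR k _ (fun n j => Nat.card (Orbits F n j))
    (fun n j => Nat.cast_nonneg _) (fun n j => ?_) (fun n j hjn => ?_) (fun n => ?_)
  · have := Nat.card_le_card_of_injective _ (orbitGram_injective (n := n) (j := j) hT hN)
    rw [card_herm hq1 hF hs] at this
    exact_mod_cast this
  · have := Nat.card_congr (Equiv.ofBijective _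
      ⟨orbitGram_injective (n := n) (j := j) hT hN, orbitGram_surjective hjn hT hN⟩)
    rw [card_herm hq1 hF hs] at this
    exact_mod_cast this
  · have h := card_fixed_dim (F := F) (by rw [hFR]; exact one_lt_pow₀ hqR two_ne_zero) n k
    rw [hFR] at h
    rw [← h]
    congr 2
    · exact Nat.card_congr ((Equiv.subtypeEquivRight fun A => and_congr_left' (hmem n A)).trans
        (Equiv.subtypeSubtypeEquivSubtypeInter _ _).symm)
    · exact Nat.card_congr (Equiv.subtypeEquivRight (hmem n))
end

section
/- For every prime power q, every integer n ≥ 1 and every integer k with 1 ≤ k ≤ n, the number of nilpotent n×n matrices over F_q of rank n−k equals (|GL(n,q)|/|GL(k,q)|) · [∏_{r=k}^{n−1} (1 − q^{−r})] / ( q^{n−k} · ∏_{r=1}^{n−k} (1 − q^{−r}) ), as an identity of rational numbers. -/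
/-!
Write `a(n, k)` for the number of nilpotent `n × n` matrices over `F_q` with kernel of dimension
`k`. The proof derives a two-term recursion for `a` and checks that the closed form satisfies it.

Pairs `(N, v)` with `N` nilpotent of corank `k` and `v ≠ 0` in `ker N` are counted in two ways.
Summing over `N` gives `a(n, k) (q^k - 1)`. Summing over `v`, all `q^n - 1` nonzero vectors
contribute equally, because conjugation by an invertible matrix carries `v` to `e₀`
(`card_conj`, `card_mul_eq`).

A matrix `N` of size `m + 1` with `N e₀ = 0` consists of a zero column, a top row `r` and an
`m × m` block `M` (`extend r M`). It is nilpotent iff `M` is, and its rank is `rank M` if `r` lies in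
the row space of `M` and `rank M + 1` otherwise. Hence (`card_stab`)

  `a(m+1, k) (q^k - 1) = (q^(m+1) - 1) (a(m, k) (q^m - q^(m-k)) + a(m, k-1) q^(m-k+1))`

for `k ≥ 1`. Together with `a(0, 0) = 1` and `a(n, 0) = 0` for `n ≥ 1` this determines `a`, and in
`closedForm_rec` the three values of the closed form involved are expressed as multiples of a single
one, which reduces the recursion to an identity of rational functions in powers of `q`.
-/

/-- The order of `GL(m,q)` as a rational number: `∏_{j=0}^{m-1} (q^m - q^j)`. -/
def glOrderQ (q m : ℕ) : ℚ := ∏ j ∈ Finset.range m, ((q : ℚ) ^ m - (q : ℚ) ^ j)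

namespace NilpotentCount

open Finset Matrix

variable {F : Type*} [Field F]

/-! ### Matrices with zero first column -/

/-- The `(m+1) × (m+1)` matrix with zero first column, whose remaining `m` columns have top row `r`
and lower block `M`. -/
def extend {m : ℕ} (r : Fin m → F) (M : Matrix (Fin m) (Fin m) F) :
    Matrix (Fin (m + 1)) (Fin (m + 1)) F :=
  Matrix.of (Fin.cons (Fin.cons 0 r) fun i => Fin.cons 0 (M i))

lemma extend_mul {m : ℕ} (r s : Fin m → F) (M P : Matrix (Fin m) (Fin m) F) :
    extend r M * extend s P = extend (r ᵥ* P) (M * P) := by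
  ext i j
  refine Fin.cases ?_ (fun i => ?_) i <;> refine Fin.cases ?_ (fun j => ?_) j <;>
    simp [extend, Matrix.mul_apply, Fin.sum_univ_succ, Matrix.vecMul, dotProduct]

lemma extend_pow {m : ℕ} (r : Fin m → F) (M : Matrix (Fin m) (Fin m) F) (a : ℕ) :
    extend r M ^ (a + 1) = extend (r ᵥ* M ^ a) (M ^ (a + 1)) := by
  induction a with
  | zero => simp
  | succ a ih => rw [pow_succ, ih, extend_mul, vecMul_vecMul, ← pow_succ, ← pow_succ]

lemma extend_zero_zero {m : ℕ} : extend (0 : Fin m → F) 0 = 0 := by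
  ext i j
  refine Fin.cases ?_ (fun i => ?_) i <;> refine Fin.cases ?_ (fun j => ?_) j <;> simp [extend]

lemma isNilpotent_extend {m : ℕ} (r : Fin m → F) (M : Matrix (Fin m) (Fin m) F) :
    IsNilpotent (extend r M) ↔ IsNilpotent M := by
  constructor
  · rintro ⟨a, ha⟩
    refine ⟨a + 1, ?_⟩
    have h := extend_pow r M a
    rw [pow_succ, ha, zero_mul] at h
    ext i j
    have := congrFun (congrFun h i.succ) j.succ
    simpa [extend] using this.symm
  · rintro ⟨a, ha⟩
    refine ⟨a + 1, ?_⟩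
    rw [extend_pow, pow_succ, ha, vecMul_zero, zero_mul, extend_zero_zero]

lemma rank_extend {m : ℕ} (r : Fin m → F) (M : Matrix (Fin m) (Fin m) F) :
    (extend r M).rank =
      Module.finrank F (Submodule.span F (Set.range M.row) ⊔ Submodule.span F {r} :
        Submodule F (Fin m → F)) := by
  let ι : (Fin m → F) →ₗ[F] (Fin (m + 1) → F) :=
    { toFun := fun w => Fin.cons 0 w
      map_add' := fun x y => by ext j; refine Fin.cases ?_ (fun j => ?_) j <;> simp
      map_smul' := fun c x => by ext j; refine Fin.cases ?_ (fun j => ?_) j <;> simp }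
  have hι : Function.Injective ι := fun x y h => Fin.cons_right_injective (α := fun _ => F) 0 h
  have hrange : Set.range (extend r M).row = Set.image ι (Set.range M.row ∪ {r}) := by
    ext w
    simp only [Set.mem_range, Fin.exists_fin_succ, Set.mem_image, Set.mem_union,
      Set.mem_singleton_iff, or_and_right, exists_or, exists_exists_eq_and, exists_eq_left]
    exact or_comm
  rw [Matrix.rank_eq_finrank_span_row, hrange, Submodule.span_image, Submodule.span_union]
  exact (Submodule.equivMapOfInjective ι hι _).finrank_eq.symm

lemma rank_extend_of_mem {m : ℕ} {r : Fin m → F} {M : Matrix (Fin m) (Fin m) F}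
    (hr : r ∈ Submodule.span F (Set.range M.row)) : (extend r M).rank = M.rank := by
  rw [rank_extend, Matrix.rank_eq_finrank_span_row M,
    sup_eq_left.2 ((Submodule.span_singleton_le_iff_mem _ _).2 hr)]

lemma rank_extend_of_notMem {m : ℕ} {r : Fin m → F} {M : Matrix (Fin m) (Fin m) F}
    (hr : r ∉ Submodule.span F (Set.range M.row)) : (extend r M).rank = M.rank + 1 := by
  rw [rank_extend, Matrix.rank_eq_finrank_span_row M, Submodule.finrank_sup_span_singleton hr]

/-! ### Nilpotent matrices and conjugation -/

lemma isNilpotent_iff_pow {n : ℕ} (N : Matrix (Fin n) (Fin n) F) :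
    IsNilpotent N ↔ N ^ n = 0 := by
  refine ⟨fun h => ?_, fun h => ⟨n, h⟩⟩
  have h1 := (Matrix.isNilpotent_charpoly_sub_pow_of_isNilpotent h).eq_zero
  have h2 := Matrix.aeval_self_charpoly N
  rw [sub_eq_zero.1 h1] at h2
  simpa using h2

/-- Every nonzero vector is the first column of an invertible matrix: if `v i ≠ 0`, replace the
`i`-th column of the identity by `v` (the determinant becomes `v i`) and swap columns `0` and `i`. -/
lemma exists_unit_mulVec {m : ℕ} (v : Fin (m + 1) → F) (hv : v ≠ 0) :
    ∃ g : (Matrix (Fin (m + 1)) (Fin (m + 1)) F)ˣ, g.1 *ᵥ Pi.single 0 1 = v := by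
  obtain ⟨i, hi⟩ := Function.ne_iff.1 hv
  have h1 : IsUnit (((1 : Matrix (Fin (m + 1)) (Fin (m + 1)) F).updateCol i v).submatrix id
      (Equiv.swap 0 i)) := by
    rw [Matrix.isUnit_iff_isUnit_det, Matrix.det_permute', ← Matrix.cramer_apply,
      Matrix.cramer_one]
    refine IsUnit.mul ?_ (by simpa using hi)
    exact (Units.isUnit (Equiv.Perm.sign (Equiv.swap 0 i))).map (Int.castRingHom F)
  obtain ⟨g, hg⟩ := h1
  refine ⟨g, ?_⟩
  ext a
  simp [hg]

/-! ### The recursion for the count -/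

variable [Fintype F]

open Classical in
/-- The nilpotent `n × n` matrices over `F` whose kernel has dimension `k`. -/
noncomputable def nilSet (F : Type*) [Field F] [Fintype F] (n k : ℕ) :
    Finset (Matrix (Fin n) (Fin n) F) :=
  {N | IsNilpotent N ∧ N.rank + k = n}

open Classical in
lemma card_ker {n k : ℕ} (N : Matrix (Fin n) (Fin n) F) (h : N.rank + k = n) :
    #{v : Fin n → F | N *ᵥ v = 0} = Fintype.card F ^ k := by
  have h1 := N.mulVecLin.finrank_range_add_finrank_ker
  have h2 : Module.finrank F (LinearMap.ker N.mulVecLin) = k := by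
    simp only [Module.finrank_fin_fun] at h1
    unfold Matrix.rank at h
    omega
  rw [← h2, ← Module.card_eq_pow_finrank (K := F) (V := LinearMap.ker N.mulVecLin),
    ← Fintype.card_subtype]
  exact Fintype.card_congr (Equiv.refl _)

open Classical in
/-- Conjugation carries the condition `N v = 0` to `N e₀ = 0`. -/
lemma card_conj {m k : ℕ} (v : Fin (m + 1) → F) (hv : v ≠ 0) :
    #{N ∈ nilSet F (m + 1) k | N *ᵥ v = 0} =
      #{N ∈ nilSet F (m + 1) k | N *ᵥ Pi.single 0 1 = 0} := by
  obtain ⟨g, rfl⟩ := exists_unit_mulVec v hv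
  have key : ∀ g : (Matrix (Fin (m + 1)) (Fin (m + 1)) F)ˣ, ∀ N ∈ nilSet F (m + 1) k,
      (g⁻¹).1 * N * g.1 ∈ nilSet F (m + 1) k := by
    intro g N hN
    have hdet : IsUnit g.1.det := (Matrix.isUnit_iff_isUnit_det _).1 g.isUnit
    have hdet' : IsUnit (g⁻¹).1.det := (Matrix.isUnit_iff_isUnit_det _).1 (g⁻¹).isUnit
    simp only [nilSet, mem_filter, mem_univ, true_and] at hN ⊢
    refine ⟨?_, ?_⟩
    · obtain ⟨a, ha⟩ := hN.1
      exact ⟨a, by rw [Units.conj_pow', ha]; simp⟩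
    · rw [Matrix.rank_mul_eq_left_of_isUnit_det _ _ hdet,
        Matrix.rank_mul_eq_right_of_isUnit_det _ _ hdet', hN.2]
  refine Finset.card_bij' (fun N _ => (g⁻¹).1 * N * g.1) (fun N _ => g.1 * N * (g⁻¹).1) ?_ ?_ ?_ ?_
  · intro N hN
    rw [mem_filter] at hN ⊢
    refine ⟨key g N hN.1, ?_⟩
    rw [← mulVec_mulVec, ← mulVec_mulVec, hN.2, mulVec_zero]
  · intro N hN
    rw [mem_filter] at hN ⊢
    refine ⟨by simpa using key g⁻¹ N hN.1, ?_⟩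
    rw [mulVec_mulVec, mul_assoc, ← Units.val_mul, inv_mul_cancel, Units.val_one, mul_one,
      ← mulVec_mulVec, hN.2, mulVec_zero]
  · intro N _
    simp [mul_assoc]
  · intro N _
    simp [mul_assoc]

open Classical in
/-- Double count of the pairs `(N, v)` with `N` nilpotent of corank `k` and `0 ≠ v ∈ ker N`. -/
lemma card_mul_eq (m k : ℕ) :
    #(nilSet F (m + 1) k) * (Fintype.card F ^ k - 1) =
      (Fintype.card F ^ (m + 1) - 1) *
        #{N ∈ nilSet F (m + 1) k | N *ᵥ Pi.single 0 1 = 0} := by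
  have h := Finset.sum_card_bipartiteAbove_eq_sum_card_bipartiteBelow
    (s := nilSet F (m + 1) k) (t := (univ : Finset (Fin (m + 1) → F)).erase 0)
    (fun N v => N *ᵥ v = 0)
  rw [Finset.sum_const_nat (m := Fintype.card F ^ k - 1), Finset.sum_const_nat
    (m := #{N ∈ nilSet F (m + 1) k | N *ᵥ Pi.single 0 1 = 0})] at h
  · rw [h, Finset.card_erase_of_mem (mem_univ _), Finset.card_univ]
    simp
  · intro v hv
    exact card_conj v (ne_of_mem_erase hv)
  · intro N hN
    simp only [nilSet, mem_filter, mem_univ, true_and] at hN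
    rw [← card_ker N hN.2, Finset.bipartiteAbove, Finset.filter_erase, card_erase_of_mem]
    simp

open Classical in
/-- The number of top rows `r` for which `extend r M` has corank `j + 1`. -/
lemma card_rows {m : ℕ} (j : ℕ) (M : Matrix (Fin m) (Fin m) F) :
    #{r : Fin m → F | (extend r M).rank + (j + 1) = m + 1} =
      (if M.rank + (j + 1) = m then Fintype.card F ^ m - Fintype.card F ^ (m - (j + 1)) else 0) +
      (if M.rank + j = m then Fintype.card F ^ (m - j) else 0) := by
  have hc : #{r : Fin m → F | r ∈ Submodule.span F (Set.range M.row)} =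
      Fintype.card F ^ M.rank := by
    rw [Matrix.rank_eq_finrank_span_row, ← Fintype.card_subtype,
      ← Module.card_eq_pow_finrank (K := F)]
  by_cases h1 : M.rank + (j + 1) = m
  · have h2 : ¬ M.rank + j = m := by omega
    rw [if_pos h1, if_neg h2, add_zero, show m - (j + 1) = M.rank by omega, ← hc,
      show Fintype.card F ^ m = #(univ : Finset (Fin m → F)) by simp,
      ← Finset.card_sdiff_of_subset (filter_subset _ _)]
    congr 1
    ext r
    by_cases hr : r ∈ Submodule.span F (Set.range M.row)
    · simp [hr, rank_extend_of_mem hr]; omega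
    · simp [hr, rank_extend_of_notMem hr]; omega
  · rw [if_neg h1, zero_add]
    by_cases h2 : M.rank + j = m
    · rw [if_pos h2, show m - j = M.rank by omega, ← hc]
      congr 1
      ext r
      by_cases hr : r ∈ Submodule.span F (Set.range M.row)
      · simp [hr, rank_extend_of_mem hr]; omega
      · simp [hr, rank_extend_of_notMem hr]; omega
    · rw [if_neg h2, Finset.card_eq_zero, Finset.filter_eq_empty_iff]
      intro r _
      by_cases hr : r ∈ Submodule.span F (Set.range M.row)
      · rw [rank_extend_of_mem hr]; omega
      · rw [rank_extend_of_notMem hr]; omega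

open Classical in
/-- The nilpotent matrices of corank `j + 1` killing the first basis vector, counted by their lower
block. For `m < j + 1` the first summand vanishes because `nilSet F m (j + 1)` is empty, and for
`m < j` so does the second, so the truncated exponents do no harm. -/
lemma card_stab (m j : ℕ) :
    #{N ∈ nilSet F (m + 1) (j + 1) | N *ᵥ Pi.single 0 1 = 0} =
      #(nilSet F m (j + 1)) * (Fintype.card F ^ m - Fintype.card F ^ (m - (j + 1))) +
      #(nilSet F m j) * Fintype.card F ^ (m - j) := by
  have h : #{N ∈ nilSet F (m + 1) (j + 1) | N *ᵥ Pi.single 0 1 = 0} =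
      #(({M : Matrix (Fin m) (Fin m) F | IsNilpotent M} : Finset _).sigma fun M =>
        ({r : Fin m → F | (extend r M).rank + (j + 1) = m + 1} : Finset (Fin m → F))) := by
    symm
    refine Finset.card_bij (fun p _ => extend p.2 p.1) ?_ ?_ ?_
    · rintro ⟨M, r⟩ h
      simp only [mem_sigma, mem_filter, mem_univ, true_and, nilSet] at h ⊢
      refine ⟨⟨(isNilpotent_extend r M).2 h.1, h.2⟩, ?_⟩
      ext i
      refine Fin.cases ?_ (fun i => ?_) i <;> simp [extend]
    · rintro ⟨M, r⟩ _ ⟨M', r'⟩ _ h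
      have h1 : M = M' := by
        ext a b
        simpa [extend] using congrFun (congrFun h a.succ) b.succ
      have h2 : r = r' := by
        ext b
        simpa [extend] using congrFun (congrFun h 0) b.succ
      rw [h1, h2]
    · intro N hN
      simp only [mem_filter, mem_univ, true_and, nilSet] at hN
      have hext : extend (fun b => N 0 b.succ) (N.submatrix Fin.succ Fin.succ) = N := by
        have h0 : ∀ i, N i 0 = 0 := fun i => by simpa using congrFun hN.2 i
        ext a b
        refine Fin.cases ?_ (fun a => ?_) a <;> refine Fin.cases ?_ (fun b => ?_) b <;>
          simp [extend, h0]
      refine ⟨⟨N.submatrix Fin.succ Fin.succ, fun b => N 0 b.succ⟩, ?_, hext⟩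
      simp only [mem_sigma, mem_filter, mem_univ, true_and]
      rw [← isNilpotent_extend (fun b => N 0 b.succ), hext]
      exact hN.1
  rw [h, card_sigma]
  simp only [card_rows, sum_add_distrib, sum_ite, sum_const_zero, add_zero, sum_const,
    filter_filter, smul_eq_mul, nilSet]

open Classical in
lemma card_nilSet_of_lt {n k : ℕ} (h : n < k) : #(nilSet F n k) = 0 := by
  rw [Finset.card_eq_zero, nilSet, Finset.filter_eq_empty_iff]
  intro N _ hN
  omega

lemma card_nilSet_zero_zero : #(nilSet F 0 0) = 1 := by
  rw [Finset.card_eq_one]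
  refine ⟨0, ?_⟩
  ext N
  simp [nilSet, Subsingleton.elim N 0]

open Classical in
/-- A nilpotent matrix of positive size is singular. -/
lemma card_nilSet_succ_zero (m : ℕ) : #(nilSet F (m + 1) 0) = 0 := by
  rw [Finset.card_eq_zero, nilSet, Finset.filter_eq_empty_iff]
  rintro N _ ⟨⟨a, ha⟩, hr⟩
  have hdet : N.det = 0 := by
    refine eq_zero_of_pow_eq_zero (n := a + 1) ?_
    rw [← Matrix.det_pow, pow_succ, ha, zero_mul, Matrix.det_zero]
  obtain ⟨v, hv, hNv⟩ := Matrix.exists_mulVec_eq_zero_iff.2 hdet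
  have h := card_ker N hr
  rw [pow_zero, Finset.card_eq_one] at h
  obtain ⟨w, hw⟩ := h
  have h1 : v ∈ ({w} : Finset _) := hw ▸ by simp [hNv]
  have h2 : (0 : Fin (m + 1) → F) ∈ ({w} : Finset _) := hw ▸ by simp
  exact hv ((mem_singleton.1 h1).trans (mem_singleton.1 h2).symm)

/-! ### The closed form -/

/-- The asserted count, in terms of the corank `k` and the rank `d`, so that
`n = k + d`. For `k = 0` and `d > 0` it vanishes, as the count does, because of the factor `i = 0`. -/
def closedForm (q k d : ℕ) : ℚ :=
  glOrderQ q (k + d) / glOrderQ q k * (∏ i ∈ range d, (1 - 1 / (q : ℚ) ^ (k + i))) /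
    ((q : ℚ) ^ d * ∏ i ∈ range d, (1 - 1 / (q : ℚ) ^ (1 + i)))

lemma glOrderQ_succ (q m : ℕ) :
    glOrderQ q (m + 1) = glOrderQ q m * ((q : ℚ) ^ m * ((q : ℚ) ^ (m + 1) - 1)) := by
  unfold glOrderQ
  rw [prod_range_succ']
  have : ∀ j ∈ range m, ((q : ℚ) ^ (m + 1) - (q : ℚ) ^ (j + 1)) = q * ((q : ℚ) ^ m - (q : ℚ) ^ j) := by
    intros; ring
  rw [prod_congr rfl this, prod_mul_distrib]
  simp
  ring

lemma glOrderQ_ne_zero {q : ℕ} (hq : 1 < q) (m : ℕ) : glOrderQ q m ≠ 0 := by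
  have hq' : (1 : ℚ) < q := by exact_mod_cast hq
  refine prod_ne_zero_iff.2 fun j hj => sub_ne_zero.2 (ne_of_gt ?_)
  exact pow_lt_pow_right₀ hq' (mem_range.1 hj)

lemma closedForm_zero {q : ℕ} (hq : 1 < q) (k : ℕ) : closedForm q k 0 = 1 := by
  simp [closedForm, glOrderQ_ne_zero hq]

lemma closedForm_zero_succ (q d : ℕ) : closedForm q 0 (d + 1) = 0 := by
  simp [closedForm, prod_range_succ']

/-- Decreasing the corank and increasing the rank by one. -/
lemma closedForm_corank_pred {q : ℕ} (j d : ℕ) (hq : 1 < q) :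
    closedForm q j (d + 1) * ((1 - 1 / (q : ℚ) ^ (d + 1)) * q) =
    closedForm q (j + 1) d * ((q : ℚ) ^ j * ((q : ℚ) ^ (j + 1) - 1) * (1 - 1 / (q : ℚ) ^ j)) := by
  have hq' : (1 : ℚ) < q := by exact_mod_cast hq
  have hA := glOrderQ_ne_zero hq j
  have hB := glOrderQ_ne_zero hq (j + 1)
  have h1 : ∀ a, (1 - 1 / (q : ℚ) ^ (1 + a)) ≠ 0 := fun a => by
    rw [sub_ne_zero, ne_comm, Ne, div_eq_one_iff_eq (by positivity)]
    exact (one_lt_pow₀ hq' (by omega)).ne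
  have hP : ∏ i ∈ range d, (1 - 1 / (q : ℚ) ^ (1 + i)) ≠ 0 := prod_ne_zero_iff.2 fun a _ => h1 a
  have e1 : ∏ i ∈ range (d + 1), (1 - 1 / (q : ℚ) ^ (j + i)) =
      (∏ i ∈ range d, (1 - 1 / (q : ℚ) ^ (j + 1 + i))) * (1 - 1 / (q : ℚ) ^ j) := by
    rw [prod_range_succ']
    congr 1
    exact prod_congr rfl fun i _ => by rw [show j + (i + 1) = j + 1 + i by ring]
  unfold closedForm
  rw [e1, prod_range_succ (fun i => 1 - 1 / (q : ℚ) ^ (1 + i)), show j + (d + 1) = j + 1 + d by ring,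
    show d + 1 = 1 + d by ring, pow_add (q : ℚ) 1 d, pow_one]
  have h2 := h1 d
  rw [pow_add, pow_one] at h2
  generalize (∏ i ∈ range d, (1 - 1 / (q : ℚ) ^ (j + 1 + i))) = Q at *
  generalize ∏ i ∈ range d, (1 - 1 / (q : ℚ) ^ (1 + i)) = P at *
  generalize 1 - 1 / (q * (q : ℚ) ^ d) = T at *
  have hG := glOrderQ_succ q j
  have hY : (q : ℚ) ^ j * ((q : ℚ) ^ (j + 1) - 1) = glOrderQ q (j + 1) / glOrderQ q j := by
    rw [hG]; field_simp
  rw [hY]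
  generalize 1 - 1 / (q : ℚ) ^ j = S at *
  field_simp

/-- Increasing the rank by one at fixed corank. -/
lemma closedForm_rank_succ {q : ℕ} (k d : ℕ) (hq : 1 < q) :
    closedForm q k (d + 1) * ((1 - 1 / (q : ℚ) ^ (d + 1)) * q) =
    closedForm q k d * ((q : ℚ) ^ (k + d) * ((q : ℚ) ^ (k + d + 1) - 1) *
      (1 - 1 / (q : ℚ) ^ (k + d))) := by
  have hq' : (1 : ℚ) < q := by exact_mod_cast hq
  have hA := glOrderQ_ne_zero hq k
  have h1 : ∀ a, (1 - 1 / (q : ℚ) ^ (1 + a)) ≠ 0 := fun a => by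
    rw [sub_ne_zero, ne_comm, Ne, div_eq_one_iff_eq (by positivity)]
    exact (one_lt_pow₀ hq' (by omega)).ne
  have hP : ∏ i ∈ range d, (1 - 1 / (q : ℚ) ^ (1 + i)) ≠ 0 := prod_ne_zero_iff.2 fun a _ => h1 a
  unfold closedForm
  rw [prod_range_succ (fun i => 1 - 1 / (q : ℚ) ^ (1 + i)), prod_range_succ, ← add_assoc,
    glOrderQ_succ, 
    show d + 1 = 1 + d by ring, pow_add (q : ℚ) 1 d, pow_one]
  have h2 := h1 d
  rw [pow_add, pow_one] at h2
  generalize (∏ i ∈ range d, (1 - 1 / (q : ℚ) ^ (k + i))) = Q at *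
  generalize ∏ i ∈ range d, (1 - 1 / (q : ℚ) ^ (1 + i)) = P at *
  generalize 1 - 1 / (q * (q : ℚ) ^ d) = T at *
  generalize 1 - 1 / (q : ℚ) ^ (k+d) = S at *
  field_simp

/-- The closed form satisfies the recursion for the count, with `k = j + 1` and `m = k + d`. -/
lemma closedForm_rec {q : ℕ} (hq : 1 < q) (j d : ℕ) :
    closedForm q (j + 1) (d + 1) * ((q : ℚ) ^ (j + 1) - 1) =
      ((q : ℚ) ^ (j + 1 + d + 1) - 1) *
        (closedForm q (j + 1) d * ((q : ℚ) ^ (j + 1 + d) - (q : ℚ) ^ d) +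
          closedForm q j (d + 1) * (q : ℚ) ^ (d + 1)) := by
  have hq' : (1 : ℚ) < q := by exact_mod_cast hq
  have hT : (1 - 1 / (q : ℚ) ^ (d + 1)) * q ≠ 0 := by
    refine mul_ne_zero ?_ (by positivity)
    rw [sub_ne_zero, ne_comm, Ne, div_eq_one_iff_eq (by positivity)]
    exact (one_lt_pow₀ hq' (by omega)).ne
  have h1 := closedForm_corank_pred j d hq
  have h2 := closedForm_rank_succ (j + 1) d hq
  apply mul_right_cancel₀ hT
  have e : (q : ℚ) ^ (j + 1 + d) * ((q : ℚ) ^ (j + 1 + d + 1) - 1) *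
      (1 - 1 / (q : ℚ) ^ (j + 1 + d)) * ((q : ℚ) ^ (j + 1) - 1) =
      ((q : ℚ) ^ (j + 1 + d + 1) - 1) *
        (((q : ℚ) ^ (j + 1 + d) - (q : ℚ) ^ d) * ((1 - 1 / (q : ℚ) ^ (d + 1)) * q) +
          (q : ℚ) ^ (d + 1) * ((q : ℚ) ^ j * ((q : ℚ) ^ (j + 1) - 1) * (1 - 1 / (q : ℚ) ^ j))) := by
    field_simp
    ring
  linear_combination ((q : ℚ) ^ (j + 1) - 1) * h2 -
    ((q : ℚ) ^ (j + 1 + d + 1) - 1) * (q : ℚ) ^ (d + 1) * h1 + closedForm q (j + 1) d * e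

/-- The number of nilpotent matrices of corank `k` and rank `d`. The induction is on the size
`k + d` and includes `k = 0`, which the recursion at `k = 1` refers to. -/
lemma card_nilSet_eq (d : ℕ) : ∀ k, (#(nilSet F (k + d) k) : ℚ) =
    closedForm (Fintype.card F) k d := by
  have hq : 1 < Fintype.card F := Fintype.one_lt_card
  have hq' : (1 : ℚ) < Fintype.card F := by exact_mod_cast hq
  suffices h : ∀ n k d, k + d = n →
      (#(nilSet F n k) : ℚ) = closedForm (Fintype.card F) k d from fun k => h _ k d rfl
  intro n
  induction n with
  | zero =>
    intro k d h
    obtain ⟨rfl, rfl⟩ : k = 0 ∧ d = 0 := by omega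
    rw [card_nilSet_zero_zero, closedForm_zero hq, Nat.cast_one]
  | succ m ih =>
    intro k d h
    rcases k with _ | j
    · obtain rfl : d = m + 1 := by omega
      rw [card_nilSet_succ_zero, closedForm_zero_succ, Nat.cast_zero]
    have hne : (Fintype.card F : ℚ) ^ (j + 1) - 1 ≠ 0 :=
      sub_ne_zero.2 (one_lt_pow₀ hq' (by omega)).ne'
    have hrec := card_mul_eq (F := F) m (j + 1)
    rw [card_stab] at hrec
    apply mul_right_cancel₀ hne
    have hrec' := congrArg (Nat.cast (R := ℚ)) hrec
    push_cast [Nat.cast_sub (Nat.one_le_pow _ _ (by omega : 0 < Fintype.card F)),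
      Nat.cast_sub (Nat.pow_le_pow_right (by omega : 0 < Fintype.card F)
        (Nat.sub_le m (j + 1)))] at hrec'
    rw [hrec']
    rcases d with _ | d
    · obtain rfl : m = j := by omega
      rw [card_nilSet_of_lt (by omega), ih m 0 (by omega), closedForm_zero hq, closedForm_zero hq]
      simp
    · obtain rfl : m = j + 1 + d := by omega
      rw [ih (j + 1) d rfl, ih j (d + 1) (by omega), closedForm_rec hq,
        show j + 1 + d - (j + 1) = d by omega, show j + 1 + d - j = d + 1 by omega]

end NilpotentCount

/-- Lusztig: the number of nilpotent `n × n` matrices over `F_q` of rank `n - k` is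
`(|GL(n,q)|/|GL(k,q)|) ∏_{r=k}^{n-1} (1 - q^{-r}) / (q^{n-k} ∏_{r=1}^{n-k} (1 - q^{-r}))`. -/
theorem statement13 (q : ℕ) (hq : IsPrimePow q) (n k : ℕ) (hk1 : 1 ≤ k) (hk2 : k ≤ n)
    (F : Type) [Field F] [Fintype F] [DecidableEq F] (hF : Fintype.card F = q) :
    (Nat.card {N : Matrix (Fin n) (Fin n) F // N ^ n = 0 ∧ N.rank = n - k} : ℚ) =
      glOrderQ q n / glOrderQ q k *
        (∏ r ∈ Finset.Icc k (n - 1), (1 - 1 / (q : ℚ) ^ r)) /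
        ((q : ℚ) ^ (n - k) * ∏ r ∈ Finset.Icc 1 (n - k), (1 - 1 / (q : ℚ) ^ r)) := by
  classical
  subst hF
  obtain ⟨d, rfl⟩ := Nat.exists_eq_add_of_le hk2
  have h1 : Nat.card {N : Matrix (Fin (k + d)) (Fin (k + d)) F //
      N ^ (k + d) = 0 ∧ N.rank = k + d - k} = (NilpotentCount.nilSet F (k + d) k).card := by
    rw [Nat.card_eq_fintype_card, Fintype.card_subtype, NilpotentCount.nilSet]
    congr 1
    ext N
    simp only [Finset.mem_filter, Finset.mem_univ, true_and, NilpotentCount.isNilpotent_iff_pow]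
    refine and_congr_right fun _ => ?_
    omega
  have h2 : Finset.Icc k (k + d - 1) = Finset.Ico k (k + d) := by
    ext
    simp only [Finset.mem_Icc, Finset.mem_Ico]
    omega
  have h3 : Finset.Icc 1 d = Finset.Ico 1 (d + 1) := by
    ext
    simp only [Finset.mem_Icc, Finset.mem_Ico]
    omega
  rw [h1, NilpotentCount.card_nilSet_eq, NilpotentCount.closedForm, Nat.add_sub_cancel_left, h2, h3,
    Finset.prod_Ico_eq_prod_range, Finset.prod_Ico_eq_prod_range, Nat.add_sub_cancel_left,
    Nat.add_sub_cancel]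
end
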